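/- arXiv:1804.00158 — 4 statements merged into one kernel-verified Lean document; each statement's English description precedes it below -/
import Mathlib

section
/- Every forest with domination number γ has at most 2.4606^γ minimum dominating sets. -/
/-- `D` is a dominating set of `G`: every vertex outside `D` has a neighbor in `D`. -/
def Dominates {V : Type*} (G : SimpleGraph V) (D : Set V) : Prop :=
  ∀ v ∉ D, ∃ u ∈ D, G.Adj u v

/-- The domination number of `G`: the minimum cardinality of a dominating set. -/
noncomputable def domN {V : Type*} (G : SimpleGraph V) : ℕ :=
  sInf {n | ∃ D : Set V, Dominates G D ∧ D.ncard = n}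

/-- `D` is a minimum dominating set of `G`. -/
def MinDomSet {V : Type*} (G : SimpleGraph V) (D : Set V) : Prop :=
  Dominates G D ∧ D.ncard = domN G

/-- The number of minimum dominating sets of `G`. -/
noncomputable def numMinDomSets {V : Type*} (G : SimpleGraph V) : ℕ :=
  {D : Set V | MinDomSet G D}.ncard

/-- An endvertex: a vertex of degree at most 1. -/
def IsEndvtx {V : Type*} (G : SimpleGraph V) (v : V) : Prop :=
  (G.neighborSet v).ncard ≤ 1

/-- A strong support vertex: a vertex adjacent to at least two endvertices. -/
def IsStrongSupportVtx {V : Type*} (G : SimpleGraph V) (v : V) : Prop :=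
  ∃ a b : V, a ≠ b ∧ G.Adj v a ∧ G.Adj v b ∧ IsEndvtx G a ∧ IsEndvtx G b

/-!
Give every selected vertex the weight `κ X` with `κ = (1 + √2)⁻¹`. The generating polynomial of the
dominating sets of a forest with `N` minimum dominating sets then starts with `κ ^ γ * N * X ^ γ`,
so it suffices that its lowest nonzero coefficient is at most `1`.

Contract the forest leaf by leaf, recording for each contracted rooted piece three polynomials: the
root is selected, dominated from inside, or left unselected with domination from inside optional.
Comparing their lowest exponents distinguishes three types of pieces. For each type the lowest
coefficients stay in an explicit region of `ℝ³`, and these regions are compatible with joining two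
roots by an edge. For isolated roots the lowest coefficients are at most `1` and just multiply.
-/

open Polynomial

section InitialTerm

variable {R : Type*} [CommSemiring R] {p q : R[X]} {m n k : ℕ} {t u : R}

/-- `p = t X ^ n + (higher terms)`, where `t` may be zero: this is how costs (the exponent `n`) and
counts (the coefficient `t`) are read off from generating polynomials. -/
def HasInitialTerm (p : R[X]) (n : ℕ) (t : R) : Prop :=
  ∃ q : R[X], p = X ^ n * q ∧ q.coeff 0 = t

theorem HasInitialTerm.mul (hp : HasInitialTerm p m t) (hq : HasInitialTerm q n u)
    (hk : m + n = k := by lia) : HasInitialTerm (p * q) k (t * u) := by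
  obtain ⟨p', rfl, rfl⟩ := hp
  obtain ⟨q', rfl, rfl⟩ := hq
  exact ⟨p' * q', by rw [← hk]; ring, mul_coeff_zero p' q'⟩

theorem HasInitialTerm.add (hp : HasInitialTerm p n t) (hq : HasInitialTerm q n u) :
    HasInitialTerm (p + q) n (t + u) := by
  obtain ⟨p', rfl, rfl⟩ := hp
  obtain ⟨q', rfl, rfl⟩ := hq
  exact ⟨p' + q', (mul_add ..).symm, coeff_add p' q' 0⟩

theorem HasInitialTerm.zero_of_lt (hp : HasInitialTerm p m t) (h : n < m) :
    HasInitialTerm p n 0 := by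
  obtain ⟨q, rfl, -⟩ := hp
  obtain ⟨d, rfl⟩ := Nat.exists_eq_add_of_lt h
  exact ⟨X ^ (d + 1) * q, by ring, by simp⟩

theorem HasInitialTerm.add_higher (hp : HasInitialTerm p n t) (hq : HasInitialTerm q (n + 1) u) :
    HasInitialTerm (p + q) n t := by
  simpa using hp.add (hq.zero_of_lt n.lt_succ_self)

theorem HasInitialTerm.higher_add (hp : HasInitialTerm p (n + 1) t) (hq : HasInitialTerm q n u) :
    HasInitialTerm (p + q) n u := by
  simpa using (hp.zero_of_lt n.lt_succ_self).add hq

theorem HasInitialTerm.sum {ι : Type*} {s : Finset ι} {p : ι → R[X]} {t : ι → R}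
    (h : ∀ i ∈ s, HasInitialTerm (p i) n (t i)) :
    HasInitialTerm (∑ i ∈ s, p i) n (∑ i ∈ s, t i) := by
  choose! q hp hq using h
  exact ⟨∑ i ∈ s, q i, by rw [Finset.mul_sum, Finset.sum_congr rfl hp],
    by rw [finsetSum_coeff, Finset.sum_congr rfl hq]⟩

theorem hasInitialTerm_zero (n : ℕ) : HasInitialTerm (0 : R[X]) n 0 := ⟨0, by simp⟩

theorem hasInitialTerm_C_mul_X_pow (t : R) (n : ℕ) : HasInitialTerm (C t * X ^ n) n t :=
  ⟨C t, mul_comm .., coeff_C_zero⟩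

theorem HasInitialTerm.trailingCoeff (h : HasInitialTerm p n t) (ht : t ≠ 0) :
    p.trailingCoeff = t := by
  obtain ⟨q, rfl, rfl⟩ := h
  have hcoeff : (X ^ n * q).coeff n = q.coeff 0 := by simpa using coeff_X_pow_mul q n 0
  have hdeg : (X ^ n * q).natTrailingDegree = n := by
    refine le_antisymm (natTrailingDegree_le_of_ne_zero (hcoeff ▸ ht)) ?_
    refine le_natTrailingDegree (fun h ↦ ht (by rw [← hcoeff, h, coeff_zero])) fun i hi ↦ ?_
    rw [coeff_X_pow_mul', if_neg hi.not_ge]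
  rw [Polynomial.trailingCoeff, hdeg, hcoeff]

end InitialTerm

/-- The generating functions of a rooted piece of a graph, summed over the selections of vertices
that dominate all non-root vertices of the piece: `sel` when the root is selected, `cov` when it is
not selected but dominated from inside the piece, and `free` when it is not selected and need not
be dominated from inside. -/
structure RootWeight (R : Type*) where
  sel : R
  cov : R
  free : R

/-- The reciprocal `κ` of the silver ratio `1 + √2`. Giving each selected vertex the weight `κ`
turns a bound `(1 + √2) ^ γ` on a number of sets of size `γ` into the bound `1` on their total
weight. -/
noncomputable def silverInv : ℝ := √2 - 1

local notation "κ" => silverInv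

theorem silverInv_sq : κ ^ 2 = 1 - 2 * κ := by
  have := Real.sq_sqrt (show (0 : ℝ) ≤ 2 by norm_num)
  rw [silverInv]
  linarith

theorem silverInv_lt_half : κ < 1 / 2 := by
  have : √2 < 3 / 2 := (Real.sqrt_lt' (by norm_num)).2 (by norm_num)
  rw [silverInv]
  linarith

theorem third_lt_silverInv : 1 / 3 < κ := by
  have : 4 / 3 < √2 := Real.lt_sqrt_of_sq_lt (by norm_num)
  rw [silverInv]
  linarith

theorem silverInv_pos : 0 < κ :=
  (by norm_num : (0 : ℝ) < 1 / 3).trans third_lt_silverInv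

theorem silverInv_mul_one_add_sqrt_two : κ * (1 + √2) = 1 := by
  have := Real.sq_sqrt (show (0 : ℝ) ≤ 2 by norm_num)
  rw [silverInv]
  linarith

section Regions

/-- The region for the initial coefficients `(a, b, e)` of `(sel, cov, free)` in a
`RootWeight.IsCovered` piece. -/
structure CoveredRegion (a b e : ℝ) : Prop where
  a_pos : 0 < a
  b_pos : 0 < b
  e_pos : 0 < e
  a_le : a ≤ κ
  b_le : b ≤ 1 - κ
  e_le : e ≤ 2 * κ

/-- The region for the initial coefficients `(a, b, e)` of `(sel, cov, free)` in a
`RootWeight.IsNeedy` piece. Together with `e_le`, the last inequality makes `sum_le` persist after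
attaching the extremal covered piece `(κ, 1 - κ, 2 * κ)`. -/
structure NeedyRegion (a b e : ℝ) : Prop where
  a_pos : 0 < a
  b_nonneg : 0 ≤ b
  e_pos : 0 < e
  a_le : a ≤ κ
  e_le : e ≤ 1
  sum_le : a + b + κ * e ≤ 1
  weighted_le : 2 * κ * a + (1 - κ) * b + 2 * κ * (1 - κ) * e ≤ 2 * κ

/-- The region for the initial coefficients `(a, b, e)` of `(sel, cov, free)` in a
`RootWeight.IsSelectable` piece. -/
structure SelectableRegion (a b e : ℝ) : Prop where
  a_pos : 0 < a
  b_nonneg : 0 ≤ b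
  e_nonneg : 0 ≤ e
  a_le : a ≤ κ
  add_b_le : a + b ≤ 2 * κ
  add_e_le : a + e ≤ 1

variable {a b e a' b' e' : ℝ}

theorem CoveredRegion.b_le_one (h : CoveredRegion a b e) : b ≤ 1 := by
  linarith [h.b_le, silverInv_pos]

theorem CoveredRegion.e_le_one (h : CoveredRegion a b e) : e ≤ 1 := by
  linarith [h.e_le, silverInv_lt_half]

theorem SelectableRegion.add_b_le_one (h : SelectableRegion a b e) : a + b ≤ 1 := by
  linarith [h.add_b_le, silverInv_lt_half]

theorem NeedyRegion.of_silverInv : NeedyRegion κ 0 1 where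
  a_pos := silverInv_pos
  b_nonneg := le_rfl
  e_pos := one_pos
  a_le := le_rfl
  e_le := le_rfl
  sum_le := by linarith [silverInv_lt_half]
  weighted_le := by linarith [silverInv_sq]

theorem CoveredRegion.attach_covered (h : CoveredRegion a b e) (h' : CoveredRegion a' b' e') :
    CoveredRegion (a * e') (b * b') (e * b') where
  a_pos := mul_pos h.a_pos h'.e_pos
  b_pos := mul_pos h.b_pos h'.b_pos
  e_pos := mul_pos h.e_pos h'.b_pos
  a_le := (mul_le_of_le_one_right h.a_pos.le h'.e_le_one).trans h.a_le
  b_le := (mul_le_of_le_one_right h.b_pos.le h'.b_le_one).trans h.b_le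
  e_le := (mul_le_of_le_one_right h.e_pos.le h'.b_le_one).trans h.e_le

theorem CoveredRegion.attach_needy (h : CoveredRegion a b e) (h' : NeedyRegion a' b' e') :
    SelectableRegion (a * e') (e * a' + b * b') (e * (a' + b')) := by
  have hb' := h'.b_nonneg
  have hae' : a * e' ≤ κ * e' := mul_le_mul_of_nonneg_right h.a_le h'.e_pos.le
  have hea' : e * a' ≤ 2 * κ * a' := mul_le_mul_of_nonneg_right h.e_le h'.a_pos.le
  have hbb' : b * b' ≤ (1 - κ) * b' := mul_le_mul_of_nonneg_right h.b_le hb'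
  have hsum : e * (a' + b') ≤ a' + b' :=
    mul_le_of_le_one_left (add_nonneg h'.a_pos.le hb') h.e_le_one
  refine ⟨mul_pos h.a_pos h'.e_pos, ?_, ?_, ?_, ?_, ?_⟩
  · exact add_nonneg (mul_pos h.e_pos h'.a_pos).le (mul_nonneg h.b_pos.le hb')
  · exact mul_nonneg h.e_pos.le (add_nonneg h'.a_pos.le hb')
  · exact (mul_le_of_le_one_right h.a_pos.le h'.e_le).trans h.a_le
  · have : κ * e' * 1 ≤ κ * e' * (2 * (1 - κ)) :=
      mul_le_mul_of_nonneg_left (by linarith [silverInv_lt_half])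
        (mul_pos silverInv_pos h'.e_pos).le
    linarith [h'.weighted_le]
  · linarith [h'.sum_le]

theorem CoveredRegion.attach_selectable (h : CoveredRegion a b e)
    (h' : SelectableRegion a' b' e') :
    CoveredRegion (a * (a' + e')) (e * a' + b * b') (e * (a' + b')) where
  a_pos := mul_pos h.a_pos (add_pos_of_pos_of_nonneg h'.a_pos h'.e_nonneg)
  b_pos := add_pos_of_pos_of_nonneg (mul_pos h.e_pos h'.a_pos) (mul_nonneg h.b_pos.le h'.b_nonneg)
  e_pos := mul_pos h.e_pos (add_pos_of_pos_of_nonneg h'.a_pos h'.b_nonneg)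
  a_le := (mul_le_of_le_one_right h.a_pos.le h'.add_e_le).trans h.a_le
  b_le := by
    have hea' : e * a' ≤ 2 * κ * a' := mul_le_mul_of_nonneg_right h.e_le h'.a_pos.le
    have hbb' : b * b' ≤ (1 - κ) * (2 * κ - a') :=
      mul_le_mul h.b_le (by linarith [h'.add_b_le]) h'.b_nonneg
        (by linarith [silverInv_lt_half])
    have : (3 * κ - 1) * a' ≤ (3 * κ - 1) * κ :=
      mul_le_mul_of_nonneg_left h'.a_le (by linarith [third_lt_silverInv])
    linarith [silverInv_sq]
  e_le := (mul_le_of_le_one_right h.e_pos.le h'.add_b_le_one).trans h.e_le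

theorem NeedyRegion.attach_covered (h : NeedyRegion a b e) (h' : CoveredRegion a' b' e') :
    NeedyRegion (a * e') (e * a' + b * b') (e * b') := by
  have hκ := silverInv_pos
  have hκ' : 0 < 1 - κ := by linarith [silverInv_lt_half]
  have hae' : a * e' ≤ a * (2 * κ) := mul_le_mul_of_nonneg_left h'.e_le h.a_pos.le
  have hea' : e * a' ≤ e * κ := mul_le_mul_of_nonneg_left h'.a_le h.e_pos.le
  have hbb' : b * b' ≤ b * (1 - κ) := mul_le_mul_of_nonneg_left h'.b_le h.b_nonneg
  have heb' : e * b' ≤ e * (1 - κ) := mul_le_mul_of_nonneg_left h'.b_le h.e_pos.le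
  refine ⟨mul_pos h.a_pos h'.e_pos,
    add_nonneg (mul_pos h.e_pos h'.a_pos).le (mul_nonneg h.b_nonneg h'.b_pos.le),
    mul_pos h.e_pos h'.b_pos, (mul_le_of_le_one_right h.a_pos.le h'.e_le_one).trans h.a_le,
    (mul_le_of_le_one_right h.e_pos.le h'.b_le_one).trans h.e_le, ?_, ?_⟩
  · calc a * e' + (e * a' + b * b') + κ * (e * b')
      _ ≤ a * (2 * κ) + (e * κ + b * (1 - κ)) + κ * (e * (1 - κ)) := by gcongr
      _ = 2 * κ * a + (1 - κ) * b + 2 * κ * (1 - κ) * e + κ ^ 2 * e := by ring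
      _ ≤ 2 * κ + κ ^ 2 * 1 := by gcongr; exacts [h.weighted_le, h.e_le]
      _ = 1 := by linarith [silverInv_sq]
  · have hκ₃ : 0 < 3 * κ - 1 := by linarith [third_lt_silverInv]
    have hκ₂ : 0 < 1 - 2 * κ := by linarith [silverInv_lt_half]
    calc 2 * κ * (a * e') + (1 - κ) * (e * a' + b * b') + 2 * κ * (1 - κ) * (e * b')
      _ ≤ 2 * κ * (a * (2 * κ)) + (1 - κ) * (e * κ + b * (1 - κ))
            + 2 * κ * (1 - κ) * (e * (1 - κ)) := by gcongr
      _ = (1 - κ) * (2 * κ * a + (1 - κ) * b + 2 * κ * (1 - κ) * e)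
            + 2 * κ * (3 * κ - 1) * a + κ * (1 - κ) * e := by ring
      _ ≤ (1 - κ) * (2 * κ) + 2 * κ * (3 * κ - 1) * κ + κ * (1 - κ) * 1 := by
          gcongr
          exacts [h.weighted_le, h.a_le, h.e_le]
      _ = 2 * κ - κ * ((3 * κ - 1) * (1 - 2 * κ)) := by ring
      _ ≤ 2 * κ := sub_le_self _ (by positivity)

theorem NeedyRegion.attach_needy (h : NeedyRegion a b e) (h' : NeedyRegion a' b' e') :
    SelectableRegion (a * e') (e * a') (e * (a' + b')) := by
  have hsum_nonneg : 0 ≤ a' + b' := add_nonneg h'.a_pos.le h'.b_nonneg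
  have hae : a * e' ≤ κ * e' := mul_le_mul_of_nonneg_right h.a_le h'.e_pos.le
  have hle : a * e' ≤ κ := (mul_le_of_le_one_right h.a_pos.le h'.e_le).trans h.a_le
  have hea : e * a' ≤ κ := (mul_le_of_le_one_left h'.a_pos.le h.e_le).trans h'.a_le
  have hsum : e * (a' + b') ≤ a' + b' := mul_le_of_le_one_left hsum_nonneg h.e_le
  exact ⟨mul_pos h.a_pos h'.e_pos, (mul_pos h.e_pos h'.a_pos).le,
    mul_nonneg h.e_pos.le hsum_nonneg, hle, by linarith, by linarith [h'.sum_le]⟩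

theorem NeedyRegion.attach_selectable (h : NeedyRegion a b e) (h' : SelectableRegion a' b' e') :
    CoveredRegion (a * (a' + e')) (e * a') (e * (a' + b')) where
  a_pos := mul_pos h.a_pos (add_pos_of_pos_of_nonneg h'.a_pos h'.e_nonneg)
  b_pos := mul_pos h.e_pos h'.a_pos
  e_pos := mul_pos h.e_pos (add_pos_of_pos_of_nonneg h'.a_pos h'.b_nonneg)
  a_le := (mul_le_of_le_one_right h.a_pos.le h'.add_e_le).trans h.a_le
  b_le := (mul_le_of_le_one_left h'.a_pos.le h.e_le).trans
    (by linarith [h'.a_le, silverInv_lt_half])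
  e_le := (mul_le_of_le_one_left (add_nonneg h'.a_pos.le h'.b_nonneg) h.e_le).trans h'.add_b_le

theorem SelectableRegion.attach_covered (h : SelectableRegion a b e)
    (h' : CoveredRegion a' b' e') :
    SelectableRegion (a * e') (b * b') (e * b') := by
  have ha : a * e' ≤ a := mul_le_of_le_one_right h.a_pos.le h'.e_le_one
  have hb : b * b' ≤ b := mul_le_of_le_one_right h.b_nonneg h'.b_le_one
  have he : e * b' ≤ e := mul_le_of_le_one_right h.e_nonneg h'.b_le_one
  exact ⟨mul_pos h.a_pos h'.e_pos, mul_nonneg h.b_nonneg h'.b_pos.le,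
    mul_nonneg h.e_nonneg h'.b_pos.le, ha.trans h.a_le, (add_le_add ha hb).trans h.add_b_le,
    (add_le_add ha he).trans h.add_e_le⟩

theorem SelectableRegion.attach_needy (h : SelectableRegion a b e) (h' : NeedyRegion a' b' e') :
    SelectableRegion (a * e') 0 0 := by
  have hle : a * e' ≤ κ := (mul_le_of_le_one_right h.a_pos.le h'.e_le).trans h.a_le
  exact ⟨mul_pos h.a_pos h'.e_pos, le_rfl, le_rfl, hle, by linarith [silverInv_pos],
    by linarith [silverInv_lt_half]⟩

theorem SelectableRegion.attach_selectable (h : SelectableRegion a b e)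
    (h' : SelectableRegion a' b' e') :
    SelectableRegion (a * (a' + e')) (e * a' + b * b') (e * (a' + b')) := by
  have ha : a * (a' + e') ≤ a := mul_le_of_le_one_right h.a_pos.le h'.add_e_le
  refine ⟨mul_pos h.a_pos (add_pos_of_pos_of_nonneg h'.a_pos h'.e_nonneg),
    add_nonneg (mul_nonneg h.e_nonneg h'.a_pos.le) (mul_nonneg h.b_nonneg h'.b_nonneg),
    mul_nonneg h.e_nonneg (add_nonneg h'.a_pos.le h'.b_nonneg), ha.trans h.a_le, ?_, ?_⟩
  · have hea' : e * a' ≤ (1 - a) * a' :=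
      mul_le_mul_of_nonneg_right (by linarith [h.add_e_le]) h'.a_pos.le
    have hbb' : b * b' ≤ (2 * κ - a) * (2 * κ - a') :=
      mul_le_mul (by linarith [h.add_b_le]) (by linarith [h'.add_b_le]) h'.b_nonneg
        (by linarith [h.a_le, silverInv_pos])
    have hsum : (1 - 2 * κ) * (a + a') ≤ (1 - 2 * κ) * (2 * κ) :=
      mul_le_mul_of_nonneg_left (by linarith [h.a_le, h'.a_le])
        (by linarith [silverInv_lt_half])
    linarith
  · have he : e * (a' + b') ≤ e := mul_le_of_le_one_right h.e_nonneg h'.add_b_le_one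
    exact (add_le_add ha he).trans h.add_e_le

end Regions

namespace RootWeight

section Attach

variable {R : Type*} [CommSemiring R]

/-- The piece consisting of its root alone, a selected vertex having weight `x`. -/
def single (x : R) : RootWeight R := ⟨x, 0, 1⟩

/-- The neutral piece left behind at a vertex whose piece has been attached elsewhere. -/
def absorbed : RootWeight R := ⟨0, 1, 1⟩

/-- The piece obtained by joining the roots of `p` and `q` by an edge, rooted at the root of `p`. -/
def attach (p q : RootWeight R) : RootWeight R where
  sel := p.sel * (q.sel + q.free)
  cov := p.free * q.sel + p.cov * q.cov
  free := p.free * (q.sel + q.cov)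

end Attach

section Admissible

variable {p q : RootWeight ℝ[X]}

/-- Dominating the root from inside costs no more than leaving it undominated, and selecting it
costs one more vertex. -/
def IsCovered (p : RootWeight ℝ[X]) : Prop :=
  ∃ m a b e, HasInitialTerm p.sel (m + 1) a ∧ HasInitialTerm p.cov m b ∧
    HasInitialTerm p.free m e ∧ CoveredRegion a b e

/-- Leaving the root undominated is cheapest; selecting it costs one more vertex, and dominating it
from inside at least one more. -/
def IsNeedy (p : RootWeight ℝ[X]) : Prop :=
  ∃ m a b e, HasInitialTerm p.sel (m + 1) a ∧ HasInitialTerm p.cov (m + 1) b ∧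
    HasInitialTerm p.free m e ∧ NeedyRegion a b e

/-- No choice at the root is cheaper than selecting it. -/
def IsSelectable (p : RootWeight ℝ[X]) : Prop :=
  ∃ m a b e, HasInitialTerm p.sel m a ∧ HasInitialTerm p.cov m b ∧
    HasInitialTerm p.free m e ∧ SelectableRegion a b e

/-- The class of pieces, closed under `attach`, that arises from single vertices of weight `κ X`. -/
def Admissible (p : RootWeight ℝ[X]) : Prop := p.IsCovered ∨ p.IsNeedy ∨ p.IsSelectable

theorem isNeedy_single : (single (C κ * X)).IsNeedy :=
  ⟨0, κ, 0, 1, by simpa [single] using hasInitialTerm_C_mul_X_pow κ 1, hasInitialTerm_zero 1,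
    by simpa [single] using hasInitialTerm_C_mul_X_pow (1 : ℝ) 0, .of_silverInv⟩

theorem IsCovered.attach_isCovered (hp : p.IsCovered) (hq : q.IsCovered) :
    (p.attach q).IsCovered := by
  obtain ⟨m, a, b, e, ha, hb, he, h⟩ := hp
  obtain ⟨n, a', b', e', ha', hb', he', h'⟩ := hq
  exact ⟨m + n, _, _, _, ha.mul (ha'.higher_add he'), (he.mul ha').higher_add (hb.mul hb'),
    he.mul (ha'.higher_add hb'), h.attach_covered h'⟩

theorem IsCovered.attach_isNeedy (hp : p.IsCovered) (hq : q.IsNeedy) :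
    (p.attach q).IsSelectable := by
  obtain ⟨m, a, b, e, ha, hb, he, h⟩ := hp
  obtain ⟨n, a', b', e', ha', hb', he', h'⟩ := hq
  exact ⟨m + n + 1, _, _, _, ha.mul (ha'.higher_add he'), (he.mul ha').add (hb.mul hb'),
    he.mul (ha'.add hb'), h.attach_needy h'⟩

theorem IsCovered.attach_isSelectable (hp : p.IsCovered) (hq : q.IsSelectable) :
    (p.attach q).IsCovered := by
  obtain ⟨m, a, b, e, ha, hb, he, h⟩ := hp
  obtain ⟨n, a', b', e', ha', hb', he', h'⟩ := hq
  exact ⟨m + n, _, _, _, ha.mul (ha'.add he'), (he.mul ha').add (hb.mul hb'),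
    he.mul (ha'.add hb'), h.attach_selectable h'⟩

theorem IsNeedy.attach_isCovered (hp : p.IsNeedy) (hq : q.IsCovered) :
    (p.attach q).IsNeedy := by
  obtain ⟨m, a, b, e, ha, hb, he, h⟩ := hp
  obtain ⟨n, a', b', e', ha', hb', he', h'⟩ := hq
  exact ⟨m + n, _, _, _, ha.mul (ha'.higher_add he'), (he.mul ha').add (hb.mul hb'),
    he.mul (ha'.higher_add hb'), h.attach_covered h'⟩

theorem IsNeedy.attach_isNeedy (hp : p.IsNeedy) (hq : q.IsNeedy) :
    (p.attach q).IsSelectable := by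
  obtain ⟨m, a, b, e, ha, hb, he, h⟩ := hp
  obtain ⟨n, a', b', e', ha', hb', he', h'⟩ := hq
  exact ⟨m + n + 1, _, _, _, ha.mul (ha'.higher_add he'), (he.mul ha').add_higher (hb.mul hb'),
    he.mul (ha'.add hb'), h.attach_needy h'⟩

theorem IsNeedy.attach_isSelectable (hp : p.IsNeedy) (hq : q.IsSelectable) :
    (p.attach q).IsCovered := by
  obtain ⟨m, a, b, e, ha, hb, he, h⟩ := hp
  obtain ⟨n, a', b', e', ha', hb', he', h'⟩ := hq
  exact ⟨m + n, _, _, _, ha.mul (ha'.add he'), (he.mul ha').add_higher (hb.mul hb'),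
    he.mul (ha'.add hb'), h.attach_selectable h'⟩

theorem IsSelectable.attach_isCovered (hp : p.IsSelectable) (hq : q.IsCovered) :
    (p.attach q).IsSelectable := by
  obtain ⟨m, a, b, e, ha, hb, he, h⟩ := hp
  obtain ⟨n, a', b', e', ha', hb', he', h'⟩ := hq
  exact ⟨m + n, _, _, _, ha.mul (ha'.higher_add he'), (he.mul ha').higher_add (hb.mul hb'),
    he.mul (ha'.higher_add hb'), h.attach_covered h'⟩

theorem IsSelectable.attach_isNeedy (hp : p.IsSelectable) (hq : q.IsNeedy) :
    (p.attach q).IsSelectable := by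
  obtain ⟨m, a, b, e, ha, hb, he, h⟩ := hp
  obtain ⟨n, a', b', e', ha', hb', he', h'⟩ := hq
  have hcov : HasInitialTerm (p.attach q).cov (m + n + 1) (e * a' + b * b') :=
    (he.mul ha').add (hb.mul hb')
  have hfree : HasInitialTerm (p.attach q).free (m + n + 1) (e * (a' + b')) :=
    he.mul (ha'.add hb')
  exact ⟨m + n, _, _, _, ha.mul (ha'.higher_add he'), hcov.zero_of_lt (Nat.lt_succ_self _),
    hfree.zero_of_lt (Nat.lt_succ_self _), h.attach_needy h'⟩

theorem IsSelectable.attach_isSelectable (hp : p.IsSelectable) (hq : q.IsSelectable) :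
    (p.attach q).IsSelectable := by
  obtain ⟨m, a, b, e, ha, hb, he, h⟩ := hp
  obtain ⟨n, a', b', e', ha', hb', he', h'⟩ := hq
  exact ⟨m + n, _, _, _, ha.mul (ha'.add he'), (he.mul ha').add (hb.mul hb'),
    he.mul (ha'.add hb'), h.attach_selectable h'⟩

theorem Admissible.attach (hp : p.Admissible) (hq : q.Admissible) : (p.attach q).Admissible := by
  rcases hp with hp | hp | hp <;> rcases hq with hq | hq | hq
  · exact .inl (hp.attach_isCovered hq)
  · exact .inr (.inr (hp.attach_isNeedy hq))
  · exact .inl (hp.attach_isSelectable hq)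
  · exact .inr (.inl (hp.attach_isCovered hq))
  · exact .inr (.inr (hp.attach_isNeedy hq))
  · exact .inl (hp.attach_isSelectable hq)
  · exact .inr (.inr (hp.attach_isCovered hq))
  · exact .inr (.inr (hp.attach_isNeedy hq))
  · exact .inr (.inr (hp.attach_isSelectable hq))

theorem Admissible.trailingCoeff_sel_add_cov_mem_Ioc (hp : p.Admissible) :
    (p.sel + p.cov).trailingCoeff ∈ Set.Ioc 0 1 := by
  suffices ∃ n t, HasInitialTerm (p.sel + p.cov) n t ∧ t ∈ Set.Ioc 0 1 by
    obtain ⟨n, t, h, ht⟩ := this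
    rwa [h.trailingCoeff ht.1.ne']
  rcases hp with ⟨m, a, b, e, ha, hb, -, h⟩ | ⟨m, a, b, e, ha, hb, -, h⟩ |
    ⟨m, a, b, e, ha, hb, -, h⟩
  · exact ⟨_, _, ha.higher_add hb, h.b_pos, h.b_le_one⟩
  · exact ⟨_, _, ha.add hb, add_pos_of_pos_of_nonneg h.a_pos h.b_nonneg,
      (le_add_of_nonneg_right (mul_pos silverInv_pos h.e_pos).le).trans h.sum_le⟩
  · exact ⟨_, _, ha.add hb, add_pos_of_pos_of_nonneg h.a_pos h.b_nonneg, h.add_b_le_one⟩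

end Admissible

section Total

variable {V R : Type*} {G : SimpleGraph V} {D : Finset V} {r s v : V}
  {p q : RootWeight R}

open Classical in
/-- The contribution of the piece `p` rooted at `v` when `D` is the set of selected roots. -/
noncomputable def value (p : RootWeight R) (G : SimpleGraph V) (D : Finset V) (v : V) : R :=
  if v ∈ D then p.sel else if ∃ u ∈ D, G.Adj u v then p.free else p.cov

theorem value_insert_of_not_adj [DecidableEq V] (hne : v ≠ s) (h : ¬G.Adj s v) :
    p.value G (insert s D) v = p.value G D v := by
  classical simp [value, hne, h]

theorem value_deleteIncidenceSet (hs : s ∉ D) (hne : v ≠ s) :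
    p.value (G.deleteIncidenceSet s) D v = p.value G D v := by
  have hadj : (∃ u ∈ D, (G.deleteIncidenceSet s).Adj u v) ↔ ∃ u ∈ D, G.Adj u v := by
    refine exists_congr fun u ↦ and_congr_right fun hu ↦ ?_
    rw [SimpleGraph.deleteIncidenceSet_adj]
    exact and_iff_left ⟨ne_of_mem_of_not_mem hu hs, hne⟩
  classical simp only [value, hadj]

variable [CommSemiring R]

theorem value_absorbed_of_isolated [DecidableEq V] (h : ∀ u, ¬G.Adj u s) :
    (absorbed : RootWeight R).value G D s = if s ∈ D then 0 else 1 := by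
  simp [value, absorbed, h]

theorem value_attach [DecidableEq V] (hleaf : ∀ v, G.Adj s v ↔ v = r) (hs : s ∉ D) :
    (p.attach q).value G D r =
      q.value G D s * p.value G D r + q.value G (insert s D) s * p.value G (insert s D) r := by
  have hsr : G.Adj s r := (hleaf r).2 rfl
  have hdom : (∃ u ∈ D, G.Adj u s) ↔ r ∈ D := by simp [G.adj_comm _ s, hleaf]
  by_cases hr : r ∈ D
  · simp only [value, attach, hs, hdom, hr, Finset.mem_insert, true_or, or_true, if_true, if_false]
    ring
  · have hne : r ≠ s := hsr.ne'
    by_cases hadj : ∃ u ∈ D, G.Adj u r <;>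
      simp [value, attach, hs, hdom, hr, hne, hsr, hadj] <;> ring

variable [Fintype V]

/-- The generating function, over dominating sets, of the graph obtained from `G` by planting a
piece at every vertex. -/
noncomputable def total (G : SimpleGraph V) (w : V → RootWeight R) : R :=
  ∑ D : Finset V, ∏ v, (w v).value G D v

theorem total_eq_sum_powerset_erase [DecidableEq V] (G : SimpleGraph V) (w : V → RootWeight R)
    (s : V) : total G w = ∑ D ∈ (Finset.univ.erase s).powerset,
      (∏ v, (w v).value G D v + ∏ v, (w v).value G (insert s D) v) := by
  rw [Finset.sum_add_distrib, ← Finset.sum_powerset_insert (Finset.notMem_erase s _),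
    Finset.insert_erase (Finset.mem_univ s), Finset.powerset_univ, total]

theorem prod_value_add_prod_value_insert [DecidableEq V] (w : V → RootWeight R)
    (hleaf : ∀ v, G.Adj s v ↔ v = r) (hs : s ∉ D) :
    ∏ v, (w v).value G D v + ∏ v, (w v).value G (insert s D) v =
      ((w r).attach (w s)).value G D r *
        ∏ v ∈ (Finset.univ.erase s).erase r, (w v).value G D v := by
  have hr : r ∈ Finset.univ.erase s := by simp [((hleaf r).2 rfl).ne']
  have hrest : ∏ v ∈ (Finset.univ.erase s).erase r, (w v).value G (insert s D) v =
      ∏ v ∈ (Finset.univ.erase s).erase r, (w v).value G D v := by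
    refine Finset.prod_congr rfl fun v hv ↦ ?_
    rw [Finset.mem_erase, Finset.mem_erase] at hv
    exact value_insert_of_not_adj hv.2.1 ((hleaf v).not.2 hv.1)
  simp only [← Finset.mul_prod_erase _ _ (Finset.mem_univ s), ← Finset.mul_prod_erase _ _ hr]
  rw [hrest, value_attach hleaf hs]
  ring

theorem total_absorb_leaf [DecidableEq V] (w : V → RootWeight R)
    (hleaf : ∀ v, G.Adj s v ↔ v = r) :
    total (G.deleteIncidenceSet s)
      (Function.update (Function.update w r ((w r).attach (w s))) s absorbed) = total G w := by
  set w' := Function.update (Function.update w r ((w r).attach (w s))) s absorbed with hw'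
  have hne : r ≠ s := ((hleaf r).2 rfl).ne'
  have hr : r ∈ Finset.univ.erase s := by simp [hne]
  have hisolated (u : V) : ¬(G.deleteIncidenceSet s).Adj u s := by
    simp [SimpleGraph.deleteIncidenceSet_adj]
  have hws : w' s = absorbed := Function.update_self ..
  have hwr : w' r = (w r).attach (w s) := by simp [hw', hne]
  rw [total_eq_sum_powerset_erase _ _ s, total_eq_sum_powerset_erase _ _ s]
  refine Finset.sum_congr rfl fun D hD ↦ ?_
  have hs : s ∉ D := fun h ↦ by simpa using Finset.mem_powerset.1 hD h
  have hrest : ∏ v ∈ (Finset.univ.erase s).erase r, (w' v).value (G.deleteIncidenceSet s) D v =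
      ∏ v ∈ (Finset.univ.erase s).erase r, (w v).value G D v := by
    refine Finset.prod_congr rfl fun v hv ↦ ?_
    rw [Finset.mem_erase, Finset.mem_erase] at hv
    rw [value_deleteIncidenceSet hs hv.2.1, hw', Function.update_of_ne hv.2.1,
      Function.update_of_ne hv.1]
  rw [prod_value_add_prod_value_insert w hleaf hs]
  simp only [← Finset.mul_prod_erase _ _ (Finset.mem_univ s)]
  rw [← Finset.mul_prod_erase _ _ hr, hrest, hws, hwr, value_absorbed_of_isolated hisolated,
    value_absorbed_of_isolated hisolated, value_deleteIncidenceSet hs hne]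
  simp [hs]

theorem total_bot (w : V → RootWeight R) :
    total (⊥ : SimpleGraph V) w = ∏ v, ((w v).sel + (w v).cov) := by
  classical
  rw [Fintype.prod_add, total]
  refine Finset.sum_congr rfl fun D _ ↦ ?_
  rw [← Finset.prod_mul_prod_compl D]
  congr 1 <;> refine Finset.prod_congr rfl fun v hv ↦ ?_
  · simp [value, hv]
  · simp [value, Finset.mem_compl.1 hv]

open Classical in
theorem total_single (G : SimpleGraph V) (x : R) :
    total G (fun _ ↦ single x) =
      ∑ D ∈ Finset.univ.filter fun D : Finset V ↦ Dominates G D, x ^ D.card := by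
  rw [total, Finset.sum_filter]
  refine Finset.sum_congr rfl fun D _ ↦ ?_
  split_ifs with hD
  · have hvalue (v : V) : (single x).value G D v = if v ∈ D then x else 1 := by
      by_cases hv : v ∈ D
      · simp [value, single, hv]
      · have : ∃ u ∈ D, G.Adj u v := by simpa using hD v (by simpa using hv)
        simp [value, single, hv, this]
    simp [hvalue]
  · simp only [Dominates, not_forall, Finset.mem_coe] at hD
    obtain ⟨v, hv, hundom⟩ := hD
    exact Finset.prod_eq_zero (Finset.mem_univ v) (by simp [value, single, hv, hundom])

end Total

end RootWeight

theorem exists_leaf_of_isAcyclic {V : Type*} {G : SimpleGraph V} [Finite G.edgeSet]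
    (hG : G.IsAcyclic) (hne : G ≠ ⊥) : ∃ s r, ∀ v, G.Adj s v ↔ v = r := by
  obtain ⟨x, y, hxy⟩ := SimpleGraph.ne_bot_iff_exists_adj.1 hne
  have : Nonempty V := ⟨x⟩
  obtain ⟨s, t, p, hp, hmax⟩ := SimpleGraph.Walk.exists_isPath_forall_isPath_length_le_length G
  have hnil : ¬p.Nil := by
    have hlen : hxy.toWalk.length ≤ p.length := hmax _ _ _ (SimpleGraph.Path.singleton hxy).2
    rw [← SimpleGraph.Walk.length_eq_zero_iff]
    simp only [SimpleGraph.Walk.length_cons, SimpleGraph.Walk.length_nil] at hlen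
    lia
  refine ⟨s, p.snd, fun v ↦ ⟨fun hadj ↦ hG.eq_snd_of_adj_start hp hadj ?_, ?_⟩⟩
  · by_contra hv
    have hlen := hmax _ _ (p.cons hadj.symm) (hp.cons hv)
    rw [SimpleGraph.Walk.length_cons] at hlen
    lia
  · rintro rfl
    exact p.adj_snd hnil

theorem RootWeight.trailingCoeff_total_mem_Ioc {V : Type*} [Fintype V] {G : SimpleGraph V}
    (hG : G.IsAcyclic) (w : V → RootWeight ℝ[X])
    (hw : ∀ v, (w v).Admissible ∨ w v = absorbed ∧ ∀ u, ¬G.Adj u v) :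
    (total G w).trailingCoeff ∈ Set.Ioc 0 1 := by
  classical
  induction G using WellFoundedLT.induction generalizing w with
  | ind G ih =>
  by_cases hbot : G = ⊥
  · subst hbot
    rw [total_bot]
    have htrailing_one : (1 : ℝ[X]).trailingCoeff = 1 := by simp [Polynomial.trailingCoeff]
    refine Finset.prod_induction _ (fun f : ℝ[X] ↦ f.trailingCoeff ∈ Set.Ioc 0 1)
      (fun f g hf hg ↦ ?_) ⟨by simp [htrailing_one], htrailing_one.le⟩ fun v _ ↦ ?_
    · rw [trailingCoeff_mul]
      exact ⟨mul_pos hf.1 hg.1, mul_le_one₀ hf.2 hg.1.le hg.2⟩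
    · rcases hw v with hv | ⟨hv, -⟩
      · exact hv.trailingCoeff_sel_add_cov_mem_Ioc
      · simp [hv, absorbed, htrailing_one]
  · obtain ⟨s, r, hleaf⟩ := exists_leaf_of_isAcyclic hG hbot
    have hsr : G.Adj s r := (hleaf r).2 rfl
    have hs : (w s).Admissible := (hw s).resolve_right fun h ↦ h.2 r hsr.symm
    have hr : (w r).Admissible := (hw r).resolve_right fun h ↦ h.2 s hsr
    have hle := G.deleteIncidenceSet_le s
    have hlt : G.deleteIncidenceSet s < G := hle.lt_of_ne fun h ↦ by
      rw [← h, SimpleGraph.deleteIncidenceSet_adj] at hsr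
      exact hsr.2.1 rfl
    rw [← total_absorb_leaf w hleaf]
    refine ih _ hlt (hG.anti hle) _ fun v ↦ ?_
    by_cases hvs : v = s
    · subst hvs
      exact .inr ⟨Function.update_self .., by simp [SimpleGraph.deleteIncidenceSet_adj]⟩
    rw [Function.update_of_ne hvs]
    by_cases hvr : v = r
    · subst hvr
      exact .inl (by simpa using hr.attach hs)
    · rw [Function.update_of_ne hvr]
      exact (hw v).imp_right fun h ↦ ⟨h.1, fun u hu ↦ h.2 u (hle hu)⟩

section Count

variable {V : Type*} {G : SimpleGraph V}

theorem domN_le_ncard {D : Set V} (hD : Dominates G D) : domN G ≤ D.ncard :=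
  Nat.sInf_le ⟨D, hD, rfl⟩

theorem exists_minDomSet (G : SimpleGraph V) : ∃ D, MinDomSet G D :=
  Nat.sInf_mem (s := {n | ∃ D : Set V, Dominates G D ∧ D.ncard = n})
    ⟨_, Set.univ, fun v hv ↦ absurd (Set.mem_univ v) hv, rfl⟩

theorem numMinDomSets_pos [Finite V] (G : SimpleGraph V) : 0 < numMinDomSets G :=
  (Set.ncard_pos (Set.toFinite _)).2 (exists_minDomSet G)

open Classical in
theorem numMinDomSets_eq_card_filter [Fintype V] (G : SimpleGraph V) :
    numMinDomSets G = (Finset.univ.filter fun D : Finset V ↦ MinDomSet G D).card := by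
  rw [numMinDomSets, ← Set.ncard_coe_finset, ← Set.ncard_image_of_injective _ Finset.coe_injective]
  congr 1
  ext D
  refine ⟨fun hD ↦ ⟨D.toFinset, by simpa using hD, D.coe_toFinset⟩, ?_⟩
  rintro ⟨D, hD, rfl⟩
  simpa using hD

theorem hasInitialTerm_total_single [Fintype V] {R : Type*} [CommSemiring R] (G : SimpleGraph V)
    (c : R) : HasInitialTerm (RootWeight.total G fun _ ↦ .single (C c * X)) (domN G)
      (c ^ domN G * numMinDomSets G) := by
  classical
  have hterm : ∀ D ∈ Finset.univ.filter fun D : Finset V ↦ Dominates G D,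
      HasInitialTerm ((C c * X) ^ D.card) (domN G)
        (if D.card = domN G then c ^ domN G else 0) := fun D hD ↦ by
    have hle : domN G ≤ D.card := by
      simpa using domN_le_ncard (Finset.mem_filter.1 hD).2
    rw [mul_pow, ← C_pow]
    have hinit := hasInitialTerm_C_mul_X_pow (c ^ D.card) D.card
    split_ifs with hcard
    · rwa [hcard] at hinit ⊢
    · exact hinit.zero_of_lt (hle.lt_of_ne' hcard)
  rw [RootWeight.total_single]
  convert HasInitialTerm.sum hterm using 1
  rw [← Finset.sum_filter, Finset.filter_filter, Finset.sum_const, nsmul_eq_mul, mul_comm,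
    numMinDomSets_eq_card_filter]
  simp [MinDomSet]

end Count

theorem forest_numMinDomSets_le_general {V : Type*} [Finite V] (F : SimpleGraph V)
    (hF : F.IsAcyclic) : (numMinDomSets F : ℝ) ≤ (1 + √2) ^ domN F := by
  cases nonempty_fintype V
  have hpos : 0 < κ ^ domN F * numMinDomSets F :=
    mul_pos (pow_pos silverInv_pos _) (mod_cast numMinDomSets_pos F)
  have hle : κ ^ domN F * numMinDomSets F ≤ 1 := by
    rw [← (hasInitialTerm_total_single F κ).trailingCoeff hpos.ne']
    exact (RootWeight.trailingCoeff_total_mem_Ioc hF _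
      fun _ ↦ .inl (.inr (.inl RootWeight.isNeedy_single))).2
  calc (numMinDomSets F : ℝ) = (κ * (1 + √2)) ^ domN F * numMinDomSets F := by
        rw [silverInv_mul_one_add_sqrt_two, one_pow, one_mul]
    _ = (1 + √2) ^ domN F * (κ ^ domN F * numMinDomSets F) := by rw [mul_pow]; ring
    _ ≤ (1 + √2) ^ domN F := mul_le_of_le_one_right (by positivity) hle

/-- Every forest with domination number γ has at most 2.4606^γ
minimum dominating sets. -/
theorem forest_numMinDomSets_le {V : Type*} [Fintype V] (F : SimpleGraph V) (γ : ℕ)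
    (hF : F.IsAcyclic) (hγ : domN F = γ) :
    (numMinDomSets F : ℝ) ≤ 2.4606 ^ γ := by
  have hsqrt : √2 < 1.4606 := (Real.sqrt_lt' (by norm_num)).2 (by norm_num)
  exact hγ ▸ (forest_numMinDomSets_le_general F hF).trans (by gcongr; linarith)
end

section
/- Let β be the largest real solution of β³ − β² − 4β + 1 = 0 (β ≈ 2.4606) and let α = β/(β−1) (α ≈ 1.6847). Then every forest with domination number γ and exactly s strong support vertices has at most α^s · β^(γ−s) minimum dominating sets. -/
/-!
Count dominating sets by their generating polynomial. A rooted tree has three of these, one for each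
state of the root (undominated, dominated but not chosen, chosen), and drawing an edge between the
roots of two trees acts on them bilinearly. Minimum dominating sets are counted by the coefficient
of the trailing term, so only bounds on trailing terms have to be propagated through the
composition. Relative to `(12 / 5) ^ m * (2 / 3) ^ s`, for `m` vertices chosen and `s` strong
support vertices, these bounds stay in a finite list that is closed under composition. The bound for
forests follows because polynomials of components multiply, and it implies the stated one because
`12 / 5 ≤ β ≤ 5 / 2` gives `2 / 3 ≤ 1 / (β - 1) = α / β`.
-/

namespace ForestDomination

open Finset Polynomial

/-! ### Trailing terms -/

/-- Partial information on the trailing term of a polynomial, see `TrailingBound.Bounds`: `degree`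
bounds the order of vanishing at `0` from below, `coeff` bounds the coefficient at `degree` from
above, and `attained` asserts that this coefficient is nonzero. -/
structure TrailingBound where
  degree : ℕ
  coeff : ℚ≥0
  attained : Bool

namespace TrailingBound

/-- The polynomial `p` satisfies the bound `x` on its trailing term. -/
def Bounds (x : TrailingBound) (p : ℕ[X]) : Prop :=
  X ^ x.degree ∣ p ∧ (p.coeff x.degree : ℚ≥0) ≤ x.coeff ∧ (x.attained → 0 < p.coeff x.degree)

instance : Add TrailingBound where
  add x y :=
    if x.degree < y.degree then x
    else if y.degree < x.degree then y
    else ⟨x.degree, x.coeff + y.coeff, x.attained || y.attained⟩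

instance : Mul TrailingBound where
  mul x y := ⟨x.degree + y.degree, x.coeff * y.coeff, x.attained && y.attained⟩

instance : LE TrailingBound where
  le x y :=
    x.degree = y.degree ∧ x.coeff ≤ y.coeff ∧ (y.attained → x.attained) ∨
      y.degree < x.degree ∧ y.attained = false

instance : DecidableLE TrailingBound := fun _ _ =>
  inferInstanceAs (Decidable (_ ∧ _ ∧ _ ∨ _ ∧ _))

variable {x y : TrailingBound} {p q : ℕ[X]}

theorem add_def (x y : TrailingBound) :
    x + y = if x.degree < y.degree then x else if y.degree < x.degree then y
      else ⟨x.degree, x.coeff + y.coeff, x.attained || y.attained⟩ :=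
  rfl

theorem mul_def (x y : TrailingBound) :
    x * y = ⟨x.degree + y.degree, x.coeff * y.coeff, x.attained && y.attained⟩ :=
  rfl

instance : CommSemigroup TrailingBound where
  mul_assoc x y z := by simp only [mul_def, add_assoc, mul_assoc, Bool.and_assoc]
  mul_comm x y := by simp only [mul_def, add_comm, mul_comm, Bool.and_comm]

instance : LeftDistribClass TrailingBound where
  left_distrib x y z := by
    simp only [add_def, mul_def, add_lt_add_iff_left]
    split_ifs <;> simp [mul_add, Bool.and_or_distrib_left]

theorem mul_mono_right (u : TrailingBound) (h : x ≤ y) : u * x ≤ u * y := by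
  obtain ⟨hd, hc, ha⟩ | ⟨hd, ha⟩ := h
  · refine .inl ⟨congrArg (u.degree + ·) hd, mul_le_mul_right hc u.coeff, ?_⟩
    simp only [mul_def, Bool.and_eq_true]
    exact And.imp_right ha
  · exact .inr ⟨Nat.add_lt_add_left hd _, by simp [mul_def, ha]⟩

theorem Bounds.mono (hp : x.Bounds p) (h : x ≤ y) : y.Bounds p := by
  obtain ⟨hdvd, hcoeff, hpos⟩ := hp
  obtain ⟨hd, hc, ha⟩ | ⟨hd, ha⟩ := h
  · rw [hd] at hdvd hcoeff hpos
    exact ⟨hdvd, hcoeff.trans hc, hpos ∘ ha⟩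
  · have hzero : p.coeff y.degree = 0 := X_pow_dvd_iff.1 hdvd _ hd
    exact ⟨(pow_dvd_pow X hd.le).trans hdvd, by simp [hzero], by simp [ha]⟩

theorem Bounds.add_of_lt (hp : x.Bounds p) (hq : y.Bounds q) (h : x.degree < y.degree) :
    x.Bounds (p + q) := by
  have hzero : q.coeff x.degree = 0 := X_pow_dvd_iff.1 hq.1 _ h
  refine ⟨dvd_add hp.1 ((pow_dvd_pow X h.le).trans hq.1), ?_⟩
  rw [coeff_add, hzero, add_zero]
  exact hp.2

theorem Bounds.add (hp : x.Bounds p) (hq : y.Bounds q) : (x + y).Bounds (p + q) := by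
  rw [add_def]
  split_ifs with hxy hyx
  · exact hp.add_of_lt hq hxy
  · rw [add_comm]
    exact hq.add_of_lt hp hyx
  · obtain ⟨hpd, hpc, hpp⟩ := hp
    obtain ⟨hqd, hqc, hqp⟩ := hq
    rw [← (not_lt.1 hyx).antisymm (not_lt.1 hxy)] at hqd hqc hqp
    refine ⟨dvd_add hpd hqd, ?_, ?_⟩
    · simpa using add_le_add hpc hqc
    · simpa using Or.imp hpp hqp

theorem Bounds.mul (hp : x.Bounds p) (hq : y.Bounds q) : (x * y).Bounds (p * q) := by
  obtain ⟨⟨p, rfl⟩, hpc, hpp⟩ := hp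
  obtain ⟨⟨q, rfl⟩, hqc, hqp⟩ := hq
  have hcoeff (k : ℕ) (f : ℕ[X]) : (X ^ k * f).coeff k = f.coeff 0 := by
    simpa using coeff_X_pow_mul f k 0
  rw [hcoeff] at hpc hpp hqc hqp
  rw [mul_mul_mul_comm, ← pow_add]
  refine ⟨dvd_mul_right _ _, ?_, ?_⟩
  · rw [mul_def, hcoeff, mul_coeff_zero, Nat.cast_mul]
    exact mul_le_mul' hpc hqc
  · rw [mul_def, hcoeff, mul_coeff_zero]
    simpa using fun hx hy => ⟨hpp hx, hqp hy⟩

/-- The bound asserting that the trailing term has degree `m` and coefficient at most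
`(12 / 5) ^ m * (2 / 3) ^ s`. -/
def weight (m s : ℕ) : TrailingBound :=
  ⟨m, (12 / 5) ^ m * (2 / 3) ^ s, true⟩

theorem weight_mul_weight (m s m' s' : ℕ) :
    weight m s * weight m' s' = weight (m + m') (s + s') := by
  simp only [weight, mul_def, pow_add, mul_mul_mul_comm, Bool.and_self]

theorem weight_anti (m : ℕ) {s s' : ℕ} (h : s ≤ s') : weight m s' ≤ weight m s :=
  have hle : (2 / 3 : ℚ≥0) ≤ 1 := (div_le_one₀ (by norm_num)).2 (by norm_num)
  .inl ⟨rfl, mul_le_mul_right (pow_le_pow_of_le_one zero_le hle h) _, id⟩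

end TrailingBound

open TrailingBound

/-! ### Tallies -/

/-- A triple indexed by the possible states, with respect to a vertex set `D`, of the root of a
rooted tree: undominated by `D` (`needy`), dominated by `D` but not in `D` (`covered`), or in `D`
(`chosen`). -/
structure Tally (R : Type*) where
  needy : R
  covered : R
  chosen : R

namespace Tally

section Attach

variable {R : Type*} [Add R] [Mul R]

/-- How tallies compose when an edge is drawn from the root of `x` to the root of `y` and the root
of `x` is kept: every vertex other than the kept root has to end up dominated. -/
def attach (x y : Tally R) : Tally R where
  needy := x.needy * y.covered
  covered := x.covered * (y.covered + y.chosen) + x.needy * y.chosen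
  chosen := x.chosen * (y.needy + y.covered + y.chosen)

end Attach

instance {R : Type*} [Semigroup R] : SemigroupAction R (Tally R) where
  smul u x := ⟨u * x.needy, u * x.covered, u * x.chosen⟩
  mul_smul u v x := by simp only [HSMul.hSMul, mul_assoc]

theorem smul_def {R : Type*} [Semigroup R] (u : R) (x : Tally R) :
    u • x = ⟨u * x.needy, u * x.covered, u * x.chosen⟩ :=
  rfl

theorem smul_attach_smul {R : Type*} [Add R] [CommSemigroup R] [LeftDistribClass R] (u v : R)
    (x y : Tally R) : (u • x).attach (v • y) = (u * v) • x.attach y := by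
  simp only [attach, smul_def, ← mul_add, mul_mul_mul_comm u _ v]

instance {R : Type*} [LE R] : LE (Tally R) where
  le x y := x.needy ≤ y.needy ∧ x.covered ≤ y.covered ∧ x.chosen ≤ y.chosen

instance {R : Type*} [LE R] [DecidableLE R] : DecidableLE (Tally R) := fun _ _ =>
  inferInstanceAs (Decidable (_ ∧ _ ∧ _))

/-- Componentwise version of `TrailingBound.Bounds`. -/
def Bounds (x : Tally TrailingBound) (p : Tally ℕ[X]) : Prop :=
  x.needy.Bounds p.needy ∧ x.covered.Bounds p.covered ∧ x.chosen.Bounds p.chosen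

variable {x y : Tally TrailingBound} {p q : Tally ℕ[X]}

theorem Bounds.attach (hp : x.Bounds p) (hq : y.Bounds q) : (x.attach y).Bounds (p.attach q) := by
  obtain ⟨hp₁, hp₂, hp₃⟩ := hp
  obtain ⟨hq₁, hq₂, hq₃⟩ := hq
  exact ⟨hp₁.mul hq₂, (hp₂.mul (hq₂.add hq₃)).add (hp₁.mul hq₃), hp₃.mul ((hq₁.add hq₂).add hq₃)⟩

theorem Bounds.mono (hp : x.Bounds p) (h : x ≤ y) : y.Bounds p :=
  ⟨hp.1.mono h.1, hp.2.1.mono h.2.1, hp.2.2.mono h.2.2⟩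

theorem smul_mono (u : TrailingBound) (h : x ≤ y) : u • x ≤ u • y :=
  ⟨mul_mono_right u h.1, mul_mono_right u h.2.1, mul_mono_right u h.2.2⟩

end Tally

/-- The part of the shape of a rooted tree on which the bounds depend: whether it is a single
vertex, and the number of leaves adjacent to the root, capped at `2`. -/
structure Kind where
  isVertex : Bool
  leaves : ℕ
  deriving DecidableEq

namespace Kind

/-- The kind of the tree obtained by drawing an edge from the root of a tree of kind `κ`, which is
kept as the root, to the root of a tree of kind `μ`. -/
def attach (κ μ : Kind) : Kind :=
  ⟨false, min 2 (κ.leaves + μ.isVertex.toNat)⟩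

/-- `1` if attaching a tree of kind `μ` turns the root of a tree of kind `κ` into a strong support
vertex, and `0` otherwise. -/
def newStrong (κ μ : Kind) : ℕ :=
  if κ.leaves = 1 ∧ μ.isVertex then 1 else 0

end Kind

/-- The bounds, in 60ths, for a tree in which fewest vertices dominate all vertices but possibly the
root only if they leave the root undominated, and choosing the root costs one vertex more. -/
def needyTally (a b c : ℚ≥0) : Tally TrailingBound :=
  ⟨⟨0, a / 60, true⟩, ⟨1, b / 60, false⟩, ⟨1, c / 60, true⟩⟩

/-- The bounds, in 60ths, for a tree in which fewest vertices dominating all vertices but possibly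
the root can dominate the root, but choosing the root costs one vertex more. -/
def coveredTally (a b c : ℚ≥0) : Tally TrailingBound :=
  ⟨⟨0, a / 60, false⟩, ⟨0, b / 60, true⟩, ⟨1, c / 60, true⟩⟩

/-- The bounds, in 60ths, for a tree in which fewest vertices dominating all vertices but possibly
the root can include the root. -/
def chosenTally (a b c : ℚ≥0) : Tally TrailingBound :=
  ⟨⟨0, a / 60, false⟩, ⟨0, b / 60, false⟩, ⟨0, c / 60, true⟩⟩

/-- A set of bounds that contains those of a single vertex and is closed under `Tally.attach` up to
scaling by a `weight`; it was found by a computer search, rounding up to 60ths. -/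
def tallyBounds : List (Kind × Tally TrailingBound) :=
  [(⟨true, 0⟩, needyTally 60 0 60),
    (⟨false, 0⟩, needyTally 38 42 45),
    (⟨false, 0⟩, needyTally 25 59 46),
    (⟨false, 0⟩, needyTally 33 50 52),
    (⟨false, 0⟩, coveredTally 0 38 38),
    (⟨false, 0⟩, coveredTally 27 25 50),
    (⟨false, 0⟩, coveredTally 13 33 50),
    (⟨false, 0⟩, coveredTally 30 16 59),
    (⟨false, 0⟩, coveredTally 15 19 59),
    (⟨false, 0⟩, chosenTally 25 20 11),
    (⟨false, 0⟩, chosenTally 12 30 14),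
    (⟨false, 0⟩, chosenTally 21 22 16),
    (⟨false, 1⟩, chosenTally 0 25 25),
    (⟨false, 2⟩, chosenTally 0 0 38)]

set_option maxRecDepth 10000 in
theorem exists_mem_tallyBounds_attach_le : ∀ x ∈ tallyBounds, ∀ y ∈ tallyBounds,
    ∃ z ∈ tallyBounds, z.1 = x.1.attach y.1 ∧
      ∃ δ < 2, x.2.attach y.2 ≤ weight δ (x.1.newStrong y.1) • z.2 := by
  decide +kernel

theorem exists_covered_add_chosen_le_weight : ∀ x ∈ tallyBounds,
    ∃ δ < 2, x.2.covered + x.2.chosen ≤ weight δ 0 := by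
  decide +kernel

/-! ### Rooted trees -/

/-- A rooted tree built from single vertices by drawing an edge from the root of a tree `s`, which
is kept as the root, to the root of a tree `t`. -/
inductive RootedTree
  | vertex
  | attach (s t : RootedTree)

namespace RootedTree

/-- The generating polynomials, by size, of the vertex sets that dominate every vertex but possibly
the root, sorted by the state of the root. -/
noncomputable def tally : RootedTree → Tally ℕ[X]
  | vertex => ⟨1, 0, X⟩
  | attach s t => s.tally.attach t.tally

/-- Whether the tree is a single vertex. -/
def isVertex : RootedTree → Bool
  | vertex => true
  | attach _ _ => false

/-- The number of childless children of the root. -/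
def leaves : RootedTree → ℕ
  | vertex => 0
  | attach s t => s.leaves + t.isVertex.toNat

/-- The number of vertices other than the root with at least two childless children. -/
def strongBelow : RootedTree → ℕ
  | vertex => 0
  | attach s t => s.strongBelow + (t.strongBelow + if 2 ≤ t.leaves then 1 else 0)

/-- The number of vertices with at least two childless children. -/
def strong (t : RootedTree) : ℕ :=
  t.strongBelow + if 2 ≤ t.leaves then 1 else 0

/-- The `Kind` of a rooted tree. -/
def kind (t : RootedTree) : Kind :=
  ⟨t.isVertex, min 2 t.leaves⟩

theorem kind_attach (s t : RootedTree) : (attach s t).kind = s.kind.attach t.kind := by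
  simp only [kind, Kind.attach, isVertex, leaves, Kind.mk.injEq, true_and]
  omega

theorem strong_attach (s t : RootedTree) :
    (attach s t).strong = s.strong + t.strong + s.kind.newStrong t.kind := by
  cases h : t.isVertex <;>
    simp only [strong, strongBelow, kind, Kind.newStrong, leaves, h, Bool.toNat_false,
      Bool.toNat_true, and_true, and_false, reduceCtorEq, if_false] <;>
    grind

theorem exists_mem_tallyBounds (t : RootedTree) :
    ∃ x ∈ tallyBounds, x.1 = t.kind ∧ ∃ m, (weight m t.strong • x.2).Bounds t.tally := by
  induction t with
  | vertex =>
    refine ⟨(⟨true, 0⟩, needyTally 60 0 60), by simp [tallyBounds], rfl, 0, ?_⟩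
    simp [Tally.Bounds, TrailingBound.Bounds, Tally.smul_def, mul_def, weight, needyTally, tally,
      strong, strongBelow, leaves]
  | attach s t ihs iht =>
    obtain ⟨x, hx, hxs, m, hm⟩ := ihs
    obtain ⟨y, hy, hyt, n, hn⟩ := iht
    obtain ⟨z, hz, hzk, δ, -, hle⟩ := exists_mem_tallyBounds_attach_le x hx y hy
    rw [hxs, hyt] at hzk hle
    refine ⟨z, hz, hzk.trans (kind_attach s t).symm, m + n + δ, ?_⟩
    rw [strong_attach, ← weight_mul_weight, ← weight_mul_weight, mul_smul]
    refine Tally.Bounds.mono ?_ (Tally.smul_mono _ hle)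
    rw [← Tally.smul_attach_smul]
    exact hm.attach hn

end RootedTree

/-- The trailing term of `p` has coefficient at most `(12 / 5) ^ m * (2 / 3) ^ s`, where `m` is its
degree. -/
def HasWeightBound (p : ℕ[X]) (s : ℕ) : Prop :=
  ∃ m, (weight m s).Bounds p

namespace HasWeightBound

variable {p q : ℕ[X]} {s s' : ℕ}

theorem mul (hp : HasWeightBound p s) (hq : HasWeightBound q s') :
    HasWeightBound (p * q) (s + s') := by
  obtain ⟨m, hm⟩ := hp
  obtain ⟨n, hn⟩ := hq
  exact ⟨m + n, weight_mul_weight m s n s' ▸ hm.mul hn⟩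

theorem anti (hp : HasWeightBound p s') (h : s ≤ s') : HasWeightBound p s :=
  hp.imp fun m hm => hm.mono (weight_anti m h)

end HasWeightBound

theorem RootedTree.hasWeightBound (t : RootedTree) :
    HasWeightBound (t.tally.covered + t.tally.chosen) t.strong := by
  obtain ⟨x, hx, -, m, -, hcovered, hchosen⟩ := t.exists_mem_tallyBounds
  obtain ⟨δ, -, hle⟩ := exists_covered_add_chosen_le_weight x hx
  have hsum := hcovered.add hchosen
  simp only [Tally.smul_def, ← mul_add] at hsum
  exact ⟨m + δ, weight_mul_weight m t.strong δ 0 ▸ hsum.mono (mul_mono_right _ hle)⟩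

section GenPoly

variable {V : Type*} {S T : Finset V}

open scoped Classical in
/-- The generating polynomial, by size, of the subsets of `S` with property `p`. -/
noncomputable def genPoly (S : Finset V) (p : Finset V → Prop) : ℕ[X] :=
  ∑ D ∈ S.powerset with p D, X ^ #D

open scoped Classical in
theorem genPoly_eq_sum_ite (S : Finset V) (p : Finset V → Prop) :
    genPoly S p = ∑ D ∈ S.powerset, if p D then X ^ #D else 0 :=
  sum_filter _ _

theorem genPoly_congr {p q : Finset V → Prop} (h : ∀ D ⊆ S, (p D ↔ q D)) :
    genPoly S p = genPoly S q := by
  classical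
  exact sum_congr (filter_congr fun D hD => h D (mem_powerset.1 hD)) fun _ _ => rfl

theorem genPoly_add {p q s : Finset V → Prop} (hpq : ∀ D, ¬(p D ∧ q D))
    (h : ∀ D ⊆ S, (s D ↔ p D ∨ q D)) : genPoly S p + genPoly S q = genPoly S s := by
  classical
  simp only [genPoly_eq_sum_ite, ← sum_add_distrib]
  refine sum_congr rfl fun D hD => ?_
  have := hpq D
  rw [h D (mem_powerset.1 hD)]
  split_ifs <;> simp_all

theorem sum_powerset_union [DecidableEq V] {R : Type*} [AddCommMonoid R] (hST : Disjoint S T)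
    (f : Finset V → R) :
    ∑ D ∈ (S ∪ T).powerset, f D = ∑ D ∈ S.powerset, ∑ E ∈ T.powerset, f (D ∪ E) := by
  have hinter {D : Finset V} (hD : D ∈ (S ∪ T).powerset) : D ∩ S ∪ D ∩ T = D := by
    rw [← inter_union_distrib_left, inter_eq_left.2 (mem_powerset.1 hD)]
  rw [← sum_product']
  refine sum_nbij' (fun D => (D ∩ S, D ∩ T)) (fun x => x.1 ∪ x.2) ?_ ?_ (fun D => hinter) ?_ ?_
  · simp
  · simp only [mem_product, mem_powerset]
    exact fun x hx => union_subset_union hx.1 hx.2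
  · rintro ⟨D, E⟩ hDE
    simp only [mem_product, mem_powerset] at hDE
    have := disjoint_left.1 hST
    ext <;> grind
  · exact fun D hD => congrArg f (hinter hD).symm

theorem genPoly_union [DecidableEq V] (hST : Disjoint S T) {p₁ p₂ q₁ q₂ s : Finset V → Prop}
    (hp : ∀ D, ¬(p₁ D ∧ p₂ D))
    (h : ∀ D ⊆ S, ∀ E ⊆ T, (s (D ∪ E) ↔ p₁ D ∧ q₁ E ∨ p₂ D ∧ q₂ E)) :
    genPoly (S ∪ T) s = genPoly S p₁ * genPoly T q₁ + genPoly S p₂ * genPoly T q₂ := by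
  classical
  simp only [genPoly_eq_sum_ite, sum_powerset_union hST, sum_mul_sum, ← sum_add_distrib]
  refine sum_congr rfl fun D hD => sum_congr rfl fun E hE => ?_
  rw [mem_powerset] at hD hE
  have := hp D
  rw [card_union_of_disjoint (hST.mono hD hE), pow_add]
  simp only [h D hD E hE, mul_ite, ite_mul, mul_zero, zero_mul]
  split_ifs <;> grind

theorem genPoly_mul [DecidableEq V] (hST : Disjoint S T) {p q s : Finset V → Prop}
    (h : ∀ D ⊆ S, ∀ E ⊆ T, (s (D ∪ E) ↔ p D ∧ q E)) :
    genPoly (S ∪ T) s = genPoly S p * genPoly T q := by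
  simpa [genPoly] using genPoly_union hST (p₂ := fun _ => False) (q₂ := fun _ => False)
    (by simp) (by simpa using h)

end GenPoly

/-! ### Dominating sets -/

variable {V : Type*} {F : SimpleGraph V} {S T D E : Finset V} {r c v : V}

/-- The vertex `v` belongs to `D` or has a neighbor in `D`. -/
def IsDominated (F : SimpleGraph V) (D : Finset V) (v : V) : Prop :=
  v ∈ D ∨ ∃ u ∈ D, F.Adj u v

theorem isDominated_union [DecidableEq V] :
    IsDominated F (D ∪ E) v ↔ IsDominated F D v ∨ IsDominated F E v := by
  simp only [IsDominated, mem_union]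
  grind

/-- The generating polynomial, by size, of the subsets of `S` that dominate `S`. -/
noncomputable def domPoly (F : SimpleGraph V) (S : Finset V) : ℕ[X] :=
  genPoly S fun D => ∀ v ∈ S, IsDominated F D v

/-- Every vertex of `S` other than `r` is dominated by `D`. -/
def DominatesBelow (F : SimpleGraph V) (S : Finset V) (r : V) (D : Finset V) : Prop :=
  ∀ v ∈ S, v ≠ r → IsDominated F D v

/-- The generating polynomials, by size, of the subsets of `S` that dominate every vertex of `S` but
possibly `r`, sorted by the state of `r`. -/
noncomputable def rootTally (F : SimpleGraph V) (S : Finset V) (r : V) : Tally ℕ[X] where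
  needy := genPoly S fun D => ¬IsDominated F D r ∧ DominatesBelow F S r D
  covered := genPoly S fun D => (r ∉ D ∧ IsDominated F D r) ∧ DominatesBelow F S r D
  chosen := genPoly S fun D => r ∈ D ∧ DominatesBelow F S r D

theorem rootTally_singleton (F : SimpleGraph V) (r : V) : rootTally F {r} r = ⟨1, 0, X⟩ := by
  classical
  have hp : ({r} : Finset V).powerset = {∅, {r}} := rfl
  simp [rootTally, genPoly, hp, DominatesBelow, IsDominated, filter_insert, filter_singleton]

theorem rootTally_covered_add_chosen (F : SimpleGraph V) (S : Finset V) (r : V) :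
    (rootTally F S r).covered + (rootTally F S r).chosen =
      genPoly S fun D => IsDominated F D r ∧ DominatesBelow F S r D := by
  refine genPoly_add (by tauto) fun D _ => ?_
  have hr : r ∈ D → IsDominated F D r := Or.inl
  tauto

theorem rootTally_needy_add_covered_add_chosen (F : SimpleGraph V) (S : Finset V) (r : V) :
    (rootTally F S r).needy + (rootTally F S r).covered + (rootTally F S r).chosen =
      genPoly S (DominatesBelow F S r) := by
  rw [add_assoc, rootTally_covered_add_chosen]
  exact genPoly_add (by tauto) fun D _ => by grind

theorem domPoly_eq_rootTally (hr : r ∈ S) :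
    domPoly F S = (rootTally F S r).covered + (rootTally F S r).chosen := by
  rw [rootTally_covered_add_chosen]
  refine genPoly_congr fun D _ => ⟨fun h => ⟨h r hr, fun v hv _ => h v hv⟩, fun h v hv => ?_⟩
  by_cases hvr : v = r
  · exact hvr ▸ h.1
  · exact h.2 v hv hvr

/-- The edge `rc` is the only edge of `F` between the disjoint sets `S ∋ r` and `T ∋ c`. -/
structure IsSoleEdge (F : SimpleGraph V) (S T : Finset V) (r c : V) : Prop where
  disjoint : Disjoint S T
  left_mem : r ∈ S
  right_mem : c ∈ T
  adj_iff : ∀ u ∈ S, ∀ v ∈ T, F.Adj u v ↔ u = r ∧ v = c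

namespace IsSoleEdge

theorem symm (h : IsSoleEdge F S T r c) : IsSoleEdge F T S c r where
  disjoint := h.disjoint.symm
  left_mem := h.right_mem
  right_mem := h.left_mem
  adj_iff u hu v hv := by rw [F.adj_comm, h.adj_iff v hv u hu, and_comm]

theorem adj (h : IsSoleEdge F S T r c) : F.Adj r c :=
  (h.adj_iff r h.left_mem c h.right_mem).2 ⟨rfl, rfl⟩

theorem isDominated_iff (h : IsSoleEdge F S T r c) (hE : E ⊆ T) (hv : v ∈ S) :
    IsDominated F E v ↔ v = r ∧ c ∈ E := by
  constructor
  · rintro (hvE | ⟨u, hu, huv⟩)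
    · exact absurd (hE hvE) (disjoint_left.1 h.disjoint hv)
    · obtain ⟨hvr, huc⟩ := (h.adj_iff v hv u (hE hu)).1 huv.symm
      exact ⟨hvr, huc ▸ hu⟩
  · rintro ⟨rfl, hc⟩
    exact .inr ⟨c, hc, h.adj.symm⟩

theorem dominatesBelow_union [DecidableEq V] (h : IsSoleEdge F S T r c) (hD : D ⊆ S) (hE : E ⊆ T) :
    DominatesBelow F (S ∪ T) r (D ∪ E) ↔
      DominatesBelow F S r D ∧ DominatesBelow F T c E ∧ (IsDominated F E c ∨ r ∈ D) := by
  have hrT : r ∉ T := disjoint_left.1 h.disjoint h.left_mem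
  have hS : (∀ v ∈ S, v ≠ r → IsDominated F (D ∪ E) v) ↔ DominatesBelow F S r D :=
    forall₃_congr fun v hv hvr => by simp [isDominated_union, h.isDominated_iff hE hv, hvr]
  have hT : (∀ v ∈ T, v ≠ r → IsDominated F (D ∪ E) v) ↔
      DominatesBelow F T c E ∧ (IsDominated F E c ∨ r ∈ D) := by
    have hiff (v) (hv : v ∈ T) :
        IsDominated F (D ∪ E) v ↔ (v = c ∧ r ∈ D) ∨ IsDominated F E v := by
      rw [isDominated_union, h.symm.isDominated_iff hD hv]
    have hc := h.right_mem
    unfold DominatesBelow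
    grind
  rw [← hS, ← hT]
  simp only [DominatesBelow, mem_union, or_imp, forall_and]

theorem rootTally_union [DecidableEq V] (h : IsSoleEdge F S T r c) :
    rootTally F (S ∪ T) r = (rootTally F S r).attach (rootTally F T c) := by
  have hmem {D E : Finset V} (hE : E ⊆ T) : r ∈ D ∪ E ↔ r ∈ D := by
    have hrE : r ∉ E := fun hrE => disjoint_left.1 h.disjoint h.left_mem (hE hrE)
    simp [hrE]
  have hroot {D E : Finset V} (hE : E ⊆ T) :
      IsDominated F (D ∪ E) r ↔ IsDominated F D r ∨ c ∈ E := by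
    simp [isDominated_union, h.isDominated_iff hE h.left_mem]
  have hr {D : Finset V} : r ∈ D → IsDominated F D r := Or.inl
  have hc {E : Finset V} : c ∈ E → IsDominated F E c := Or.inl
  rw [Tally.attach, rootTally_covered_add_chosen, rootTally_needy_add_covered_add_chosen, rootTally,
    Tally.mk.injEq]
  refine ⟨genPoly_mul h.disjoint fun D hD E hE => ?_,
    genPoly_union h.disjoint (by tauto) fun D hD E hE => ?_,
    genPoly_mul h.disjoint fun D hD E hE => ?_⟩ <;>
  · rw [h.dominatesBelow_union hD hE]
    simp only [hmem hE, hroot hE]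
    have := @hr D
    have := @hc E
    tauto

end IsSoleEdge

/-! ### Decomposing trees along root edges -/

/-- The graph induced by `F` on `S`, rooted at `r`, is built from single vertices as described
by `t`. -/
inductive Decomposes [DecidableEq V] (F : SimpleGraph V) : Finset V → V → RootedTree → Prop
  | vertex (r : V) : Decomposes F {r} r .vertex
  | attach {S T : Finset V} {r c : V} {s t : RootedTree} (h : IsSoleEdge F S T r c)
      (hs : Decomposes F S r s) (ht : Decomposes F T c t) : Decomposes F (S ∪ T) r (.attach s t)

namespace Decomposes

variable [DecidableEq V] {t : RootedTree}

theorem rootTally_eq (h : Decomposes F S r t) : rootTally F S r = t.tally := by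
  induction h with
  | vertex r => exact rootTally_singleton F r
  | attach h _ _ ihs iht => rw [h.rootTally_union, ihs, iht, RootedTree.tally]

theorem congr {G : SimpleGraph V} (h : Decomposes G S r t)
    (hGF : ∀ u ∈ S, ∀ v ∈ S, G.Adj u v ↔ F.Adj u v) : Decomposes F S r t := by
  induction h with
  | vertex r => exact .vertex r
  | attach h _ _ ihs iht =>
    refine .attach ⟨h.disjoint, h.left_mem, h.right_mem, fun u hu v hv => ?_⟩
      (ihs fun u hu v hv => ?_) (iht fun u hu v hv => ?_)
    · rw [← hGF u (mem_union_left _ hu) v (mem_union_right _ hv), h.adj_iff u hu v hv]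
    · exact hGF u (mem_union_left _ hu) v (mem_union_left _ hv)
    · exact hGF u (mem_union_right _ hu) v (mem_union_right _ hv)

end Decomposes

theorem reachable_or_reachable_of_deleteEdges {v : V} (h : F.Reachable r v) :
    (F.deleteEdges {s(r, c)}).Reachable r v ∨ (F.deleteEdges {s(r, c)}).Reachable c v := by
  rw [SimpleGraph.reachable_iff_reflTransGen] at h
  induction h with
  | refl => exact .inl .rfl
  | @tail a b _ hab ih =>
    by_cases he : s(a, b) = s(r, c)
    · obtain ⟨-, rfl⟩ | ⟨-, rfl⟩ := Sym2.eq_iff.1 he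
      · exact .inr .rfl
      · exact .inl .rfl
    · have hadj : (F.deleteEdges {s(r, c)}).Reachable a b :=
        (SimpleGraph.deleteEdges_adj.2 ⟨hab, he⟩).reachable
      exact ih.imp (·.trans hadj) (·.trans hadj)

theorem isSoleEdge_of_isBridge {G : SimpleGraph V} (hbridge : F.IsBridge s(r, c))
    (hrc : F.Adj r c) (hG : G = F.deleteEdges {s(r, c)})
    (hS : ∀ v, v ∈ S ↔ G.Reachable r v) (hT : ∀ v, v ∈ T ↔ G.Reachable c v) :
    IsSoleEdge F S T r c := by
  rw [SimpleGraph.isBridge_iff, ← hG] at hbridge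
  have hdis : Disjoint S T := disjoint_left.2 fun v hvS hvT =>
    hbridge (((hS v).1 hvS).trans ((hT v).1 hvT).symm)
  have hcT : c ∈ T := (hT c).2 .rfl
  refine ⟨hdis, (hS r).2 .rfl, hcT, fun u hu v hv => ⟨fun huv => ?_, ?_⟩⟩
  · by_contra hne
    have he : s(u, v) ≠ s(r, c) := fun he => by
      obtain huv | ⟨rfl, -⟩ := Sym2.eq_iff.1 he
      · exact hne huv
      · exact disjoint_left.1 hdis hu hcT
    have hadj : G.Adj u v := hG ▸ SimpleGraph.deleteEdges_adj.2 ⟨huv, he⟩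
    exact disjoint_left.1 hdis ((hS v).2 (((hS u).1 hu).trans hadj.reachable)) hv
  · rintro ⟨rfl, rfl⟩
    exact hrc

theorem Decomposes.of_deleteEdges [DecidableEq V] {t : RootedTree} {a b : V}
    (h : Decomposes (F.deleteEdges {s(a, b)}) S r t) (hab : a ∉ S ∨ b ∉ S) : Decomposes F S r t :=
  h.congr fun u hu v hv => by
    simp only [SimpleGraph.deleteEdges_adj, Set.mem_singleton_iff, Sym2.eq_iff]
    grind

theorem exists_decomposes [Finite V] [DecidableEq V] (hF : F.IsAcyclic)
    (hS : ∀ v, v ∈ S ↔ F.Reachable r v) : ∃ t, Decomposes F S r t := by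
  classical
  have := Fintype.ofFinite V
  induction F using WellFoundedLT.induction generalizing S r with
  | ind F ih =>
    by_cases! hisolated : ∀ c, ¬F.Adj r c
    · refine ⟨.vertex, ?_⟩
      have hSr : S = {r} := by
        ext v
        rw [hS, mem_singleton, SimpleGraph.reachable_iff_reflTransGen]
        exact ⟨fun h => (Relation.reflTransGen_iff_eq hisolated).1 h, fun h => h ▸ .refl⟩
      exact hSr ▸ .vertex r
    · obtain ⟨c, hrc⟩ := hisolated
      let G := F.deleteEdges {s(r, c)}
      let A : Finset V := {v | G.Reachable r v}
      let B : Finset V := {v | G.Reachable c v}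
      have hA (v) : v ∈ A ↔ G.Reachable r v := by simp [A]
      have hB (v) : v ∈ B ↔ G.Reachable c v := by simp [B]
      have hedge : IsSoleEdge F A B r c := isSoleEdge_of_isBridge
        (SimpleGraph.isAcyclic_iff_forall_adj_isBridge.1 hF hrc) hrc rfl hA hB
      have hlt : G < F :=
        lt_of_le_not_ge (F.deleteEdges_le _) fun h => by simpa [G] using h hrc
      obtain ⟨s, hs⟩ := ih G hlt (hF.anti hlt.le) hA
      obtain ⟨t, ht⟩ := ih G hlt (hF.anti hlt.le) hB
      have hSAB : S = A ∪ B := by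
        ext v
        rw [hS, mem_union, hA, hB]
        exact ⟨reachable_or_reachable_of_deleteEdges,
          Or.rec (·.mono hlt.le) fun h => hrc.reachable.trans (h.mono hlt.le)⟩
      have hcA : c ∉ A := fun h => disjoint_left.1 hedge.disjoint h hedge.right_mem
      have hrB : r ∉ B := disjoint_left.1 hedge.disjoint hedge.left_mem
      refine ⟨.attach s t, ?_⟩
      rw [hSAB]
      exact .attach hedge (hs.of_deleteEdges (.inr hcA)) (ht.of_deleteEdges (.inl hrB))

/-! ### Strong support vertices -/

open scoped Classical in
/-- The number of neighbors of `v` in `S` that are endvertices of `F`. -/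
noncomputable def numLeaves (F : SimpleGraph V) (S : Finset V) (v : V) : ℕ :=
  #{u ∈ S | F.Adj v u ∧ IsEndvtx F u}

open scoped Classical in
/-- The vertices of `S` adjacent to at least two members of `S` that are endvertices of `F`. -/
noncomputable def strongIn (F : SimpleGraph V) (S : Finset V) : Finset V :=
  {v ∈ S | 2 ≤ numLeaves F S v}

theorem mem_strongIn : v ∈ strongIn F S ↔ v ∈ S ∧ 2 ≤ numLeaves F S v := by
  simp [strongIn]

theorem numLeaves_union [DecidableEq V] (hST : Disjoint S T) (v : V) :
    numLeaves F (S ∪ T) v = numLeaves F S v + numLeaves F T v := by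
  classical
  simp only [numLeaves, filter_union, card_union_of_disjoint (disjoint_filter_filter hST)]

theorem numLeaves_eq_zero (h : ∀ u ∈ S, F.Adj v u → ¬IsEndvtx F u) : numLeaves F S v = 0 := by
  classical
  rw [numLeaves, card_eq_zero, filter_eq_empty_iff]
  exact fun u hu huv => h u hu huv.1 huv.2

theorem eq_of_isEndvtx [Finite V] {a b : V} (hv : IsEndvtx F v) (ha : F.Adj v a)
    (hb : F.Adj v b) : a = b :=
  (Set.ncard_le_one (Set.toFinite _)).1 hv a ha b hb

theorem numLeaves_le_one [Finite V] (hv : IsEndvtx F v) : numLeaves F S v ≤ 1 := by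
  classical
  exact card_le_one.2 fun _ ha _ hb => eq_of_isEndvtx hv (mem_filter.1 ha).2.1 (mem_filter.1 hb).2.1

namespace IsSoleEdge

theorem numLeaves_right_of_ne (h : IsSoleEdge F S T r c) (hv : v ∈ S) (hvr : v ≠ r) :
    numLeaves F T v = 0 :=
  numLeaves_eq_zero fun u hu huv => absurd ((h.adj_iff v hv u hu).1 huv).1 hvr

theorem not_isEndvtx_right [Finite V] (h : IsSoleEdge F S T r c) (hv : v ∈ T) (hcv : F.Adj c v) :
    ¬IsEndvtx F c := fun hc =>
  disjoint_left.1 h.disjoint h.left_mem (eq_of_isEndvtx hc hcv h.adj.symm ▸ hv)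

theorem erase_strongIn_union_subset [Finite V] [DecidableEq V] (h : IsSoleEdge F S T r c)
    (hr : IsEndvtx F r → IsEndvtx F c) :
    (strongIn F (S ∪ T)).erase r ⊆ (strongIn F S).erase r ∪ strongIn F T := by
  intro v hv
  obtain ⟨hvr, hv, hv2⟩ := mem_erase.1 hv |>.imp_right mem_strongIn.1
  rw [mem_union, mem_erase, mem_strongIn, mem_strongIn]
  have hsplit := numLeaves_union (F := F) h.disjoint v
  obtain hvS | hvT := mem_union.1 hv
  · have := h.numLeaves_right_of_ne hvS hvr
    exact .inl ⟨hvr, hvS, by omega⟩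
  · suffices numLeaves F S v = 0 ∨ numLeaves F (S ∪ T) v ≤ 1 from .inr ⟨hvT, by omega⟩
    by_cases hvc : v = c
    · subst hvc
      refine (em (IsEndvtx F r)).symm.imp (fun hre => numLeaves_eq_zero fun u hu hvu => ?_)
        fun hre => numLeaves_le_one (hr hre)
      rwa [((h.adj_iff u hu v hvT).1 hvu.symm).1]
    · exact .inl (h.symm.numLeaves_right_of_ne hvT hvc)

end IsSoleEdge

namespace Decomposes

variable [Finite V] [DecidableEq V] {t : RootedTree}

theorem numLeaves_right_le (h : IsSoleEdge F S T r c) (ht : Decomposes F T c t) :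
    numLeaves F T r ≤ t.isVertex.toNat := by
  cases ht with
  | vertex =>
    classical
    exact card_filter_le _ _
  | attach h' hs ht =>
    refine (numLeaves_eq_zero fun u hu hru => ?_).le
    obtain rfl := ((h.adj_iff r h.left_mem u hu).1 hru).2
    exact h.not_isEndvtx_right (mem_union_right _ h'.right_mem) h'.adj

theorem numLeaves_le (h : Decomposes F S r t) : numLeaves F S r ≤ t.leaves := by
  induction h with
  | vertex r => exact (numLeaves_eq_zero (by simp)).le
  | attach h _ ht ihs _ =>
    rw [numLeaves_union h.disjoint]
    exact add_le_add ihs (numLeaves_right_le h ht)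

theorem card_strongIn_le_of_card_erase_le (h : Decomposes F S r t)
    (hbelow : #((strongIn F S).erase r) ≤ t.strongBelow) : #(strongIn F S) ≤ t.strong := by
  have hleaves := h.numLeaves_le
  have herase := card_erase_add_one (s := strongIn F S) (a := r)
  have hnotMem := erase_eq_of_notMem (s := strongIn F S) (a := r)
  rw [mem_strongIn] at herase hnotMem
  unfold RootedTree.strong
  grind

theorem card_erase_strongIn_le (h : Decomposes F S r t)
    (hr : ∀ v ∈ S, F.Adj r v → IsEndvtx F r → IsEndvtx F v) :
    #((strongIn F S).erase r) ≤ t.strongBelow := by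
  induction h with
  | vertex r => simp [strongIn, filter_singleton, numLeaves_eq_zero]
  | @attach S T r c s t h _ ht ihs iht =>
    have hrS : #((strongIn F S).erase r) ≤ s.strongBelow :=
      ihs fun v hv => hr v (mem_union_left _ hv)
    have hcT : #((strongIn F T).erase c) ≤ t.strongBelow :=
      iht fun v hv hcv hc => absurd hc (h.not_isEndvtx_right hv hcv)
    calc #((strongIn F (S ∪ T)).erase r)
      _ ≤ #((strongIn F S).erase r ∪ strongIn F T) := card_le_card <|
        h.erase_strongIn_union_subset (hr c (mem_union_right _ h.right_mem) h.adj)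
      _ ≤ #((strongIn F S).erase r) + #(strongIn F T) := card_union_le _ _
      _ ≤ s.strongBelow + t.strong :=
        add_le_add hrS (ht.card_strongIn_le_of_card_erase_le hcT)

end Decomposes

/-! ### Components -/

theorem domPoly_union [DecidableEq V] (hST : Disjoint S T)
    (hadj : ∀ u ∈ S, ∀ v ∈ T, ¬F.Adj u v) :
    domPoly F (S ∪ T) = domPoly F S * domPoly F T := by
  have hS {E : Finset V} (hE : E ⊆ T) (v) (hv : v ∈ S) : ¬IsDominated F E v :=
    not_or_intro (fun h => disjoint_left.1 hST hv (hE h)) fun ⟨u, hu, huv⟩ =>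
      hadj v hv u (hE hu) huv.symm
  have hT {D : Finset V} (hD : D ⊆ S) (v) (hv : v ∈ T) : ¬IsDominated F D v :=
    not_or_intro (fun h => disjoint_left.1 hST (hD h) hv) fun ⟨u, hu, huv⟩ =>
      hadj u (hD hu) v hv huv
  refine genPoly_mul hST fun D hD E hE => ?_
  simp only [mem_union, or_imp, forall_and, isDominated_union]
  exact and_congr (forall₂_congr fun v hv => or_iff_left (hS hE v hv))
    (forall₂_congr fun v hv => or_iff_right (hT hD v hv))

theorem strongIn_union [DecidableEq V] (hST : Disjoint S T)
    (hadj : ∀ u ∈ S, ∀ v ∈ T, ¬F.Adj u v) :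
    strongIn F (S ∪ T) = strongIn F S ∪ strongIn F T := by
  have hS (v) (hv : v ∈ S) : numLeaves F T v = 0 :=
    numLeaves_eq_zero fun u hu huv => absurd huv (hadj v hv u hu)
  have hT (v) (hv : v ∈ T) : numLeaves F S v = 0 :=
    numLeaves_eq_zero fun u hu huv => absurd huv.symm (hadj u hu v hv)
  ext v
  simp only [mem_strongIn, mem_union, numLeaves_union hST]
  grind

theorem hasWeightBound_empty : HasWeightBound (domPoly F ∅) #(strongIn F ∅) :=
  ⟨0, by simp [TrailingBound.Bounds, weight, domPoly, genPoly, strongIn]⟩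

theorem hasWeightBound_component [Finite V] (hF : F.IsAcyclic) (C : F.ConnectedComponent)
    (hS : ∀ v, v ∈ S ↔ F.connectedComponentMk v = C) :
    HasWeightBound (domPoly F S) #(strongIn F S) := by
  classical
  -- If the root were an endvertex but its neighbor were not, the root would be an endvertex
  -- adjacent to that neighbor, but not one of its childless children.
  obtain ⟨r, rfl, hr⟩ : ∃ r, F.connectedComponentMk r = C ∧
      ∀ v ∈ S, F.Adj r v → IsEndvtx F r → IsEndvtx F v := by
    by_contra! h
    obtain ⟨u, rfl⟩ := C.exists_rep
    obtain ⟨v, hv, -, -, hv'⟩ := h u rfl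
    obtain ⟨-, -, -, hv'', -⟩ := h v ((hS v).1 hv)
    exact hv' hv''
  have hreach (v) : v ∈ S ↔ F.Reachable r v := by
    rw [hS, eq_comm, SimpleGraph.ConnectedComponent.eq]
  obtain ⟨t, ht⟩ := exists_decomposes hF hreach
  rw [domPoly_eq_rootTally ((hS r).2 rfl), ht.rootTally_eq]
  exact t.hasWeightBound.anti (ht.card_strongIn_le_of_card_erase_le (ht.card_erase_strongIn_le hr))

theorem hasWeightBound_univ [Fintype V] (hF : F.IsAcyclic) :
    HasWeightBound (domPoly F univ) #(strongIn F univ) := by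
  classical
  let W (𝒞 : Finset F.ConnectedComponent) : Finset V := {v | F.connectedComponentMk v ∈ 𝒞}
  suffices h : ∀ 𝒞, HasWeightBound (domPoly F (W 𝒞)) #(strongIn F (W 𝒞)) by
    simpa [W] using h univ
  intro 𝒞
  induction 𝒞 using Finset.induction_on with
  | empty => simpa [W] using hasWeightBound_empty
  | insert C 𝒞 hC ih =>
    have hunion : W (insert C 𝒞) = W {C} ∪ W 𝒞 := by
      ext v
      simp [W]
    have hdis : Disjoint (W {C}) (W 𝒞) := disjoint_left.2 fun v hv hv' => by
      simp only [W, mem_filter, mem_univ, true_and, mem_singleton] at hv hv'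
      exact hC (hv ▸ hv')
    have hadj : ∀ u ∈ W {C}, ∀ v ∈ W 𝒞, ¬F.Adj u v := fun u hu v hv huv => by
      have := SimpleGraph.ConnectedComponent.sound huv.reachable
      simp only [W, mem_filter, mem_univ, true_and, mem_singleton] at hu hv
      exact hC (hu ▸ this ▸ hv)
    rw [hunion, domPoly_union hdis hadj, strongIn_union hdis hadj]
    exact ((hasWeightBound_component hF C (by simp [W])).mul ih).anti (card_union_le _ _)

theorem coeff_domPoly_univ [Fintype V] (F : SimpleGraph V) (k : ℕ) :
    (domPoly F univ).coeff k = {D : Set V | Dominates F D ∧ D.ncard = k}.ncard := by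
  classical
  have hdom (D : Finset V) : Dominates F (D : Set V) ↔ ∀ v, IsDominated F D v := by
    simp [Dominates, IsDominated, or_iff_not_imp_left]
  have himage : {D : Set V | Dominates F D ∧ D.ncard = k} =
      ((↑) : Finset V → Set V) '' {D : Finset V | (∀ v, IsDominated F D v) ∧ #D = k} := by
    ext D
    lift D to Finset V using D.toFinite
    simp [hdom]
  have hcoe : {D : Finset V | (∀ v, IsDominated F D v) ∧ #D = k} =
      ((univ.filter fun D : Finset V => (∀ v, IsDominated F D v) ∧ #D = k : Finset _) : Set _) := by
    simp
  rw [himage, Set.ncard_image_of_injective _ coe_injective, hcoe, Set.ncard_coe_finset]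
  simp [domPoly, genPoly, coeff_X_pow, filter_filter, eq_comm]

theorem card_strongIn_univ [Fintype V] (F : SimpleGraph V) :
    #(strongIn F univ) = {v : V | IsStrongSupportVtx F v}.ncard := by
  classical
  rw [← Set.ncard_coe_finset]
  congr 1
  ext v
  rw [mem_coe, mem_strongIn, numLeaves, Nat.succ_le_iff, one_lt_card]
  simp only [mem_filter, mem_univ, true_and, Set.mem_ofPred_eq, IsStrongSupportVtx]
  grind

theorem coeff_domPoly_pos_iff [Fintype V] {k : ℕ} : 0 < (domPoly F univ).coeff k ↔
    k ∈ {n | ∃ D : Set V, Dominates F D ∧ D.ncard = n} := by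
  rw [coeff_domPoly_univ, Set.ncard_pos]
  rfl

theorem domN_eq_of_bounds [Fintype V] {m s : ℕ} (h : (weight m s).Bounds (domPoly F univ)) :
    domN F = m := by
  have hm := coeff_domPoly_pos_iff.1 (h.2.2 rfl)
  refine (Nat.sInf_le hm).antisymm (le_csInf ⟨m, hm⟩ fun n hn => ?_)
  by_contra! hnm
  exact (coeff_domPoly_pos_iff.2 hn).ne' (X_pow_dvd_iff.1 h.1 n hnm)

theorem root_mem_Icc {β : ℝ} (hβroot : β ^ 3 - β ^ 2 - 4 * β + 1 = 0)
    (hβmax : ∀ x : ℝ, x ^ 3 - x ^ 2 - 4 * x + 1 = 0 → x ≤ β) : β ∈ Set.Icc (12 / 5) (5 / 2) := by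
  constructor
  · obtain ⟨x, hx, hx0⟩ := intermediate_value_Icc (a := (12 / 5 : ℝ)) (b := 5 / 2) (by norm_num)
      (f := fun x => x ^ 3 - x ^ 2 - 4 * x + 1) (by fun_prop)
      (show (0 : ℝ) ∈ _ by constructor <;> norm_num)
    exact hx.1.trans (hβmax x hx0)
  · by_contra! h
    nlinarith [mul_pos (sub_pos.2 h) (sub_pos.2 h)]

theorem weight_coeff_le {β : ℝ} (hβ : β ∈ Set.Icc (12 / 5) (5 / 2)) (γ s : ℕ) :
    (12 / 5 : ℝ) ^ γ * (2 / 3) ^ s ≤ (β / (β - 1)) ^ s * β ^ (γ - s) := by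
  obtain ⟨hl, hu⟩ := hβ
  have hβ1 : 2 / 3 ≤ 1 / (β - 1) := by
    rw [div_le_div_iff₀] <;> linarith
  calc (12 / 5 : ℝ) ^ γ * (2 / 3) ^ s
    _ ≤ β ^ (s + (γ - s)) * (1 / (β - 1)) ^ s := by
      gcongr ?_ * ?_
      · exact (pow_le_pow_left₀ (by norm_num) hl γ).trans
          (pow_le_pow_right₀ (by linarith) (by omega))
      · exact pow_le_pow_left₀ (by norm_num) hβ1 s
    _ = (β / (β - 1)) ^ s * β ^ (γ - s) := by
      rw [pow_add, mul_right_comm, ← mul_pow, mul_one_div]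

end ForestDomination

open ForestDomination

theorem forest_numMinDomSets_le_refined_general {V : Type*} [Finite V] (F : SimpleGraph V)
    (hF : F.IsAcyclic) : (numMinDomSets F : ℝ) ≤
      (12 / 5) ^ domN F * (2 / 3) ^ {v | IsStrongSupportVtx F v}.ncard := by
  have := Fintype.ofFinite V
  obtain ⟨m, hm⟩ := hasWeightBound_univ hF
  have hnum : numMinDomSets F = (domPoly F Finset.univ).coeff m := by
    rw [coeff_domPoly_univ, ← domN_eq_of_bounds hm]
    rfl
  rw [hnum, domN_eq_of_bounds hm, ← card_strongIn_univ]
  have hle := (NNRat.cast_le (K := ℝ)).2 hm.2.1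
  simpa [TrailingBound.weight] using hle

/-- with β the largest real root of β³-β²-4β+1=0 and α = β/(β-1),
every forest with domination number γ and exactly s strong support vertices has
at most α^s · β^(γ-s) minimum dominating sets. -/
theorem forest_numMinDomSets_le_refined {V : Type*} [Fintype V] (F : SimpleGraph V)
    (γ s : ℕ) (β α : ℝ)
    (hβroot : β ^ 3 - β ^ 2 - 4 * β + 1 = 0)
    (hβmax : ∀ x : ℝ, x ^ 3 - x ^ 2 - 4 * x + 1 = 0 → x ≤ β)
    (hα : α = β / (β - 1))
    (hF : F.IsAcyclic) (hγ : domN F = γ)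
    (hs : {v : V | IsStrongSupportVtx F v}.ncard = s) :
    (numMinDomSets F : ℝ) ≤ α ^ s * β ^ (γ - s) := by
  subst hα hγ hs
  exact (forest_numMinDomSets_le_refined_general F hF).trans
    (weight_coeff_le (root_mem_Icc hβroot hβmax) _ _)
end

section
/- Every tree with independence number α has at most 2^(α−1) + 1 maximum independent sets. -/
/-- `S` is an independent set of `G`: pairwise non-adjacent vertices. -/
def IndepSetOf {V : Type*} (G : SimpleGraph V) (S : Set V) : Prop :=
  S.Pairwise fun a b => ¬ G.Adj a b

/-- The independence number of `G`: the maximum cardinality of an independent set. -/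
noncomputable def indepN {V : Type*} (G : SimpleGraph V) : ℕ :=
  sSup {n | ∃ S : Set V, IndepSetOf G S ∧ S.ncard = n}

/-- `S` is a maximum independent set of `G`. -/
def MaxIndepSet {V : Type*} (G : SimpleGraph V) (S : Set V) : Prop :=
  IndepSetOf G S ∧ S.ncard = indepN G

/-- The number of maximum independent sets of `G`. -/
noncomputable def numMaxIndepSets {V : Type*} (G : SimpleGraph V) : ℕ :=
  {S : Set V | MaxIndepSet G S}.ncard

/-!
Fix a maximum independent set `S` of a bipartite graph. By Hall's theorem there is a matching of
`V \ S` into `S`: if some `T ⊆ V \ S` lying on one side of the bipartition had fewer than `|T|`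
neighbors in `S`, exchanging them for `T` would enlarge `S`. As every maximum independent set has
exactly `|S|` elements, it contains exactly one end of each matching edge and every unmatched vertex
of `S`. Hence it is determined by its trace on `S`, and two of them whose traces are complementary
in `S` are complementary in `V`. If the graph is connected, it has at most one partition into two
independent sets, so among the `2 ^ (α - 1)` pairs of complementary subsets of `S` at most one
consists of two traces.
-/

theorem two_mul_ncard_le_card_add_ncard_inter_compl {β : Type*} [BooleanAlgebra β] [Finite β]
    (𝒜 : Set β) : 2 * 𝒜.ncard ≤ Nat.card β + (𝒜 ∩ compl '' 𝒜).ncard :=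
  calc
    2 * 𝒜.ncard = 𝒜.ncard + (compl '' 𝒜).ncard := by
      rw [Set.ncard_image_of_injective _ compl_injective, two_mul]
    _ = (𝒜 ∪ compl '' 𝒜).ncard + (𝒜 ∩ compl '' 𝒜).ncard :=
      (Set.ncard_union_add_ncard_inter _ _).symm
    _ ≤ Nat.card β + (𝒜 ∩ compl '' 𝒜).ncard :=
      Nat.add_le_add_right (Set.ncard_le_card _) _

section BipartiteGraph

variable {V : Type*} {G : SimpleGraph V} {A S T U : Set V}

theorem exists_indepSetOf_compl (hG : G.IsBipartite) :
    ∃ A : Set V, IndepSetOf G A ∧ IndepSetOf G Aᶜ := by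
  obtain ⟨c⟩ := hG
  refine ⟨{v | c v = 0}, fun v hv w hw _ hvw => c.valid hvw (hv.trans hw.symm),
    fun v hv w hw _ hvw => c.valid hvw ?_⟩
  rw [Fin.eq_one_of_ne_zero _ hv, Fin.eq_one_of_ne_zero _ hw]

theorem IndepSetOf.eq_or_eq_compl (hG : G.Preconnected) (hS : IndepSetOf G S)
    (hS' : IndepSetOf G Sᶜ) (hT : IndepSetOf G T) (hT' : IndepSetOf G Tᶜ) :
    T = S ∨ T = Sᶜ := by
  have alternates {A : Set V} (hA : IndepSetOf G A) (hA' : IndepSetOf G Aᶜ) {v w : V}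
      (hvw : G.Adj v w) : v ∈ A ↔ w ∉ A :=
    ⟨fun hv hw => hA hv hw hvw.ne hvw, fun hw => by_contra fun hv => hA' hv hw hvw.ne hvw⟩
  have agree_iff (v w : V) : (v ∈ T ↔ v ∈ S) ↔ (w ∈ T ↔ w ∈ S) := by
    obtain ⟨p⟩ := hG v w
    induction p with
    | nil => rfl
    | cons hvw _ ih => rw [alternates hS hS' hvw, alternates hT hT' hvw, not_iff_not, ih]
  by_cases h : ∃ r, r ∈ T ↔ r ∈ S
  · obtain ⟨r, hr⟩ := h
    exact .inl (Set.ext fun v => (agree_iff r v).1 hr)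
  · exact .inr (Set.ext fun v => (not_iff_comm.1 (not_iff.1 (not_exists.1 h v))).symm)

theorem ncard_setOf_indepSetOf_compl_le_two (hG : G.Preconnected) :
    {S : Set V | IndepSetOf G S ∧ IndepSetOf G Sᶜ}.ncard ≤ 2 := by
  rcases Set.eq_empty_or_nonempty {S : Set V | IndepSetOf G S ∧ IndepSetOf G Sᶜ}
    with hempty | ⟨S, hS, hS'⟩
  · simp [hempty]
  · have hsub : {T : Set V | IndepSetOf G T ∧ IndepSetOf G Tᶜ} ⊆ {S, Sᶜ} :=
      fun T hT => hS.eq_or_eq_compl hG hS' hT.1 hT.2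
    calc
      _ ≤ ({S, Sᶜ} : Set (Set V)).ncard := Set.ncard_le_ncard hsub
      _ ≤ ({Sᶜ} : Set (Set V)).ncard + 1 := Set.ncard_insert_le S {Sᶜ}
      _ = 2 := by rw [Set.ncard_singleton]

/-- A matching of `G` between disjoint sets `R` and `S` which saturates `R`. It is encoded by the map
`f` sending each vertex of `R` to its partner in `S`; the values of `f` outside `R` play no role. -/
structure MatchesInto (G : SimpleGraph V) (f : V → V) (R S : Set V) : Prop where
  injOn : Set.InjOn f R
  mapsTo : Set.MapsTo f R S
  adj : ∀ v ∈ R, G.Adj v (f v)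

variable [Finite V]

theorem exists_matchesInto {R : Set V}
    (h : ∀ T ⊆ R, T.ncard ≤ {s ∈ S | ∃ t ∈ T, G.Adj t s}.ncard) :
    ∃ f, MatchesInto G f R S := by
  classical
  have := Fintype.ofFinite V
  obtain ⟨f, hf, hfS⟩ := (Fintype.all_card_le_filter_rel_iff_exists_injective
      fun (v : R) (s : V) => s ∈ S ∧ G.Adj v s).1 fun T => by
    have neighbors_eq : {s ∈ S | ∃ t ∈ (T.map (.subtype _) : Set V), G.Adj t s} =
        ({s | ∃ v ∈ T, s ∈ S ∧ G.Adj v s} : Finset V) := by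
      ext s
      simp only [Finset.coe_map, Function.Embedding.coe_subtype, Set.mem_image, Set.mem_ofPred_eq,
        SetLike.mem_coe, Finset.mem_filter_univ]
      grind
    have hT := h (T.map (.subtype _)) (by simp)
    rwa [neighbors_eq, Set.ncard_coe_finset, Set.ncard_coe_finset, Finset.card_map] at hT
  exact ⟨fun v => if hv : v ∈ R then f ⟨v, hv⟩ else v,
    fun v hv w hw hvw => by simpa [hv, hw, hf.eq_iff] using hvw,
    fun v hv => by simpa [hv] using (hfS ⟨v, hv⟩).1,
    fun v hv => by simpa [hv] using (hfS ⟨v, hv⟩).2⟩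

theorem isGreatest_indepN (G : SimpleGraph V) :
    IsGreatest {n | ∃ S : Set V, IndepSetOf G S ∧ S.ncard = n} (indepN G) := by
  have hbdd : BddAbove {n | ∃ S : Set V, IndepSetOf G S ∧ S.ncard = n} :=
    ⟨Nat.card V, by rintro _ ⟨S, -, rfl⟩; exact Set.ncard_le_card S⟩
  exact ⟨Nat.sSup_mem ⟨0, ∅, Set.pairwise_empty _, Set.ncard_empty V⟩ hbdd,
    fun _ hn => le_csSup hbdd hn⟩

theorem IndepSetOf.ncard_le_indepN (hT : IndepSetOf G T) : T.ncard ≤ indepN G :=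
  (isGreatest_indepN G).2 ⟨T, hT, rfl⟩

theorem exists_maxIndepSet (G : SimpleGraph V) : ∃ S, MaxIndepSet G S :=
  (isGreatest_indepN G).1

namespace MaxIndepSet

theorem ncard_le_ncard_neighbors (hS : MaxIndepSet G S) (hT : IndepSetOf G T) (hTS : Disjoint T S) :
    T.ncard ≤ {s ∈ S | ∃ t ∈ T, G.Adj t s}.ncard := by
  set N := {s ∈ S | ∃ t ∈ T, G.Adj t s}
  have hswap : IndepSetOf G (T ∪ S \ N) := by
    have : Std.Symm fun a b => ¬ G.Adj a b := ⟨fun _ _ => mt SimpleGraph.Adj.symm⟩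
    exact Set.pairwise_union_of_symm.2
      ⟨hT, hS.1.mono Set.sdiff_subset, fun t ht s hs _ hts => hs.2 ⟨hs.1, t, ht, hts⟩⟩
  have hle : T.ncard + (S \ N).ncard ≤ S.ncard := by
    rw [← Set.ncard_union_eq (hTS.mono_right Set.sdiff_subset), hS.2]
    exact hswap.ncard_le_indepN
  have hsplit : (S \ N).ncard + N.ncard = S.ncard :=
    Set.ncard_sdiff_add_ncard_of_subset (Set.sep_subset _ _)
  omega

theorem ncard_le_ncard_neighbors_of_bipartition (hS : MaxIndepSet G S) (hA : IndepSetOf G A)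
    (hA' : IndepSetOf G Aᶜ) (hTS : Disjoint T S) :
    T.ncard ≤ {s ∈ S | ∃ t ∈ T, G.Adj t s}.ncard := by
  have hdisj : Disjoint {s ∈ S | ∃ t ∈ T ∩ A, G.Adj t s} {s ∈ S | ∃ t ∈ T \ A, G.Adj t s} := by
    rw [Set.disjoint_left]
    rintro s ⟨-, t, ht, hts⟩ ⟨-, u, hu, hus⟩
    by_cases hs : s ∈ A
    · exact hA ht.2 hs hts.ne hts
    · exact hA' hu.2 hs hus.ne hus
  calc
    T.ncard = (T ∩ A).ncard + (T \ A).ncard := (Set.ncard_inter_add_ncard_sdiff_eq_ncard T A).symm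
    _ ≤ {s ∈ S | ∃ t ∈ T ∩ A, G.Adj t s}.ncard + {s ∈ S | ∃ t ∈ T \ A, G.Adj t s}.ncard :=
      add_le_add
        (hS.ncard_le_ncard_neighbors (hA.mono Set.inter_subset_right)
          (hTS.mono_left Set.inter_subset_left))
        (hS.ncard_le_ncard_neighbors (hA'.mono fun _ h => h.2)
          (hTS.mono_left Set.sdiff_subset))
    _ = ({s ∈ S | ∃ t ∈ T ∩ A, G.Adj t s} ∪ {s ∈ S | ∃ t ∈ T \ A, G.Adj t s}).ncard :=
      (Set.ncard_union_eq hdisj).symm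
    _ ≤ {s ∈ S | ∃ t ∈ T, G.Adj t s}.ncard := Set.ncard_le_ncard <| by
      rintro s (⟨hs, t, ht, hts⟩ | ⟨hs, t, ht, hts⟩) <;> exact ⟨hs, t, ht.1, hts⟩

theorem exists_matchesInto_of_isBipartite (hG : G.IsBipartite) (hS : MaxIndepSet G S) :
    ∃ f, MatchesInto G f Sᶜ S := by
  obtain ⟨A, hA, hA'⟩ := exists_indepSetOf_compl hG
  exact exists_matchesInto fun T hT =>
    hS.ncard_le_ncard_neighbors_of_bipartition hA hA' (Set.disjoint_left.2 hT)

variable {f : V → V}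

theorem mem_iff_notMem_of_matchesInto (hS : MaxIndepSet G S) (hf : MatchesInto G f Sᶜ S)
    (hT : MaxIndepSet G T) {v : V} (hv : v ∉ S) : v ∈ T ↔ f v ∉ T := by
  have hsub : T \ S ⊆ Sᶜ := fun _ h => h.2
  have himage : f '' (T \ S) = S \ T := by
    refine Set.eq_of_subset_of_ncard_le ?_ ?_
    · rintro _ ⟨u, hu, rfl⟩
      exact ⟨hf.mapsTo hu.2, fun hfu => hT.1 hu.1 hfu (hf.adj u hu.2).ne (hf.adj u hu.2)⟩
    · rw [(hf.injOn.mono hsub).ncard_image, ← Set.ncard_le_ncard_iff_ncard_sdiff_le_ncard_sdiff]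
      exact (hS.2.trans hT.2.symm).le
  calc
    v ∈ T ↔ v ∈ T \ S := (and_iff_left hv).symm
    _ ↔ f v ∈ S \ T := by rw [← himage, hf.injOn.mem_image_iff hsub hv]
    _ ↔ f v ∉ T := and_iff_right (hf.mapsTo hv)

theorem eq_of_forall_mem_iff (hS : MaxIndepSet G S) (hf : MatchesInto G f Sᶜ S)
    (hT : MaxIndepSet G T) (hU : MaxIndepSet G U) (h : ∀ s ∈ S, s ∈ T ↔ s ∈ U) : T = U := by
  ext v
  by_cases hv : v ∈ S
  · exact h v hv
  · rw [hS.mem_iff_notMem_of_matchesInto hf hT hv, hS.mem_iff_notMem_of_matchesInto hf hU hv,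
      h _ (hf.mapsTo hv)]

theorem eq_compl_of_forall_mem_iff_notMem (hS : MaxIndepSet G S) (hf : MatchesInto G f Sᶜ S)
    (hT : MaxIndepSet G T) (hU : MaxIndepSet G U) (h : ∀ s ∈ S, s ∈ T ↔ s ∉ U) : T = Uᶜ := by
  ext v
  by_cases hv : v ∈ S
  · exact h v hv
  · rw [Set.mem_compl_iff, hS.mem_iff_notMem_of_matchesInto hf hT hv,
      hS.mem_iff_notMem_of_matchesInto hf hU hv, h _ (hf.mapsTo hv)]

theorem two_mul_numMaxIndepSets_le (hS : MaxIndepSet G S) (hf : MatchesInto G f Sᶜ S) :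
    2 * numMaxIndepSets G ≤
      2 ^ indepN G + {T : Set V | MaxIndepSet G T ∧ MaxIndepSet G Tᶜ}.ncard := by
  let trace : Set V → Set S := fun T => (↑) ⁻¹' T
  have trace_injOn : Set.InjOn trace {T | MaxIndepSet G T} := fun T hT U hU h =>
    hS.eq_of_forall_mem_iff hf hT hU fun s hs => Set.ext_iff.1 h ⟨s, hs⟩
  have trace_inter_compl :
      trace '' {T | MaxIndepSet G T} ∩ compl '' (trace '' {T | MaxIndepSet G T}) ⊆
        trace '' {T | MaxIndepSet G T ∧ MaxIndepSet G Tᶜ} := by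
    rintro _ ⟨⟨T, hT, rfl⟩, _, ⟨U, hU, rfl⟩, h⟩
    have hTU : U = Tᶜ := hS.eq_compl_of_forall_mem_iff_notMem hf hU hT fun s hs =>
      Set.ext_iff.1 (compl_eq_comm.1 h).symm ⟨s, hs⟩
    exact ⟨T, ⟨hT, hTU ▸ hU⟩, rfl⟩
  calc
    2 * numMaxIndepSets G = 2 * (trace '' {T | MaxIndepSet G T}).ncard := by
      rw [trace_injOn.ncard_image, numMaxIndepSets]
    _ ≤ Nat.card (Set S) + (trace '' {T | MaxIndepSet G T ∧ MaxIndepSet G Tᶜ}).ncard :=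
      (two_mul_ncard_le_card_add_ncard_inter_compl _).trans
        (Nat.add_le_add_left (Set.ncard_le_ncard trace_inter_compl) _)
    _ ≤ 2 ^ indepN G + {T : Set V | MaxIndepSet G T ∧ MaxIndepSet G Tᶜ}.ncard := by
      refine Nat.add_le_add (le_of_eq ?_) Set.ncard_image_le
      rw [Nat.card_congr (Equiv.Set.powerset S).symm, Nat.card_coe_set_eq, Set.ncard_powerset, hS.2]

end MaxIndepSet

theorem tree_numMaxIndepSets_le_general (hG : G.Preconnected) (hbip : G.IsBipartite) :
    numMaxIndepSets G ≤ 2 ^ (indepN G - 1) + 1 := by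
  obtain ⟨S, hS⟩ := exists_maxIndepSet G
  obtain ⟨f, hf⟩ := hS.exists_matchesInto_of_isBipartite hbip
  have hpairs : {T : Set V | MaxIndepSet G T ∧ MaxIndepSet G Tᶜ}.ncard ≤ 2 :=
    (Set.ncard_le_ncard (t := {T | IndepSetOf G T ∧ IndepSetOf G Tᶜ})
      fun T hT => ⟨hT.1.1, hT.2.1⟩).trans (ncard_setOf_indepSetOf_compl_le_two hG)
  have hcount := hS.two_mul_numMaxIndepSets_le hf
  cases hα : indepN G with
  | zero => rw [hα] at hcount; omega
  | succ α => rw [hα, pow_succ] at hcount; rw [Nat.add_sub_cancel]; omega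

end BipartiteGraph

/-- Every tree with independence number α has at most 2^(α-1) + 1
maximum independent sets. -/
theorem tree_numMaxIndepSets_le {V : Type*} [Fintype V] (T : SimpleGraph V) (α : ℕ)
    (hT : T.IsTree) (hα : indepN T = α) :
    numMaxIndepSets T ≤ 2 ^ (α - 1) + 1 := by
  subst hα
  exact tree_numMaxIndepSets_le_general hT.connected.preconnected hT.isBipartite
end

section
/- Let γ and k be positive integers with k < γ. Among all choices of positive integers p_1, …, p_k with p_1 + ⋯ + p_k = γ − 1, the number of minimum dominating sets of the tree T(p_1,…,p_k) is maximized by choosing the p_i as equal as possible, i.e., by taking p_i = ⌈(γ−1)/k⌉ for i ∈ [(γ−1) mod k] and p_i = ⌊(γ−1)/k⌋ for the remaining i. -/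
/-- The tree `T(p 0, …, p (k-1))`: a root `x = Sum.inl ()`, vertices
`w i = Sum.inr (Sum.inl i)` adjacent to `x`, vertices
`v i j = Sum.inr (Sum.inr (Sum.inl ⟨i, j⟩))` adjacent to `w i`, and endvertices
`u i j = Sum.inr (Sum.inr (Sum.inr ⟨i, j⟩))` adjacent to `v i j`. -/
def TreeT {k : ℕ} (p : Fin k → ℕ) :
    SimpleGraph (Unit ⊕ Fin k ⊕ (Σ i : Fin k, Fin (p i)) ⊕ (Σ i : Fin k, Fin (p i))) :=
  SimpleGraph.fromRel fun a b =>
    (∃ i : Fin k, a = Sum.inl () ∧ b = Sum.inr (Sum.inl i)) ∨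
    (∃ (i : Fin k) (j : Fin (p i)),
      a = Sum.inr (Sum.inl i) ∧ b = Sum.inr (Sum.inr (Sum.inl ⟨i, j⟩))) ∨
    (∃ (i : Fin k) (j : Fin (p i)),
      a = Sum.inr (Sum.inr (Sum.inl ⟨i, j⟩)) ∧ b = Sum.inr (Sum.inr (Sum.inr ⟨i, j⟩)))

/-!
Every dominating set of `T(p₁, …, p_k)` meets the closed neighborhoods of the root and of the
`u(i,j)`, which are pairwise disjoint. Hence it contains a transversal of these neighborhoods, and
the minimum dominating sets are the dominating transversals. If such a transversal picks the root,
then each of the `p₁ + ⋯ + p_k` pairs `v(i,j), u(i,j)` contributes a free binary choice; if it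
picks `w(c)`, then for every `i ≠ c` at least one `v(i,j)` has to be picked. This gives
`2 ^ (p₁ + ⋯ + p_k) + ∑ c, 2 ^ p_c * ∏ i ≠ c, (2 ^ p_i - 1)` minimum dominating sets.

As a function of `p_i` and `p_j` with `p_i + p_j` fixed, this number is affine and nondecreasing in
`(2 ^ p_i - 1) * (2 ^ p_j - 1)`, so it does not decrease when a unit moves from a larger `p_i` to a
smaller `p_j`. Such moves lead from any `p` to any equitable `q` with the same sum.
-/

open Finset

section Transfer

theorem exists_lt_of_sum_eq_of_ne {ι M : Type*} [Fintype ι] [AddCommMonoid M] [LinearOrder M]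
    [IsOrderedCancelAddMonoid M] {p q : ι → M}
    (hsum : ∑ i, p i = ∑ i, q i) (hne : p ≠ q) : ∃ i, q i < p i := by
  by_contra! hle
  exact hne (funext fun i =>
    (sum_eq_sum_iff_of_le fun i _ => hle i).1 hsum i (mem_univ i))

theorem le_of_equitableOn_of_forall_transfer {ι α : Type*} [Fintype ι] [DecidableEq ι] [Preorder α]
    {F : (ι → ℕ) → α}
    (hF : ∀ (r : ι → ℕ) (i j : ι), r j ≤ r i → F (r + Pi.single i 1) ≤ F (r + Pi.single j 1))
    {p q : ι → ℕ} (hq : Set.univ.EquitableOn q) (hsum : ∑ i, p i = ∑ i, q i) : F p ≤ F q := by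
  -- The truncated difference counts the units of `p` in excess of `q`; each transfer removes one.
  induction hn : ∑ i, (p i - q i) using Nat.strong_induction_on generalizing p with
  | _ n ih =>
    obtain rfl | hne := eq_or_ne p q
    · exact le_rfl
    obtain ⟨i, hi⟩ := exists_lt_of_sum_eq_of_ne hsum hne
    obtain ⟨j, hj⟩ := exists_lt_of_sum_eq_of_ne hsum.symm hne.symm
    have hqji : q j ≤ q i + 1 := hq (Set.mem_univ j) (Set.mem_univ i)
    obtain ⟨r, rfl⟩ : ∃ r : ι → ℕ, p = r + Pi.single i 1 := by
      have hle : Pi.single i 1 ≤ p :=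
        update_le_iff.2 ⟨Nat.one_le_of_lt hi, fun _ _ => Nat.zero_le _⟩
      exact ⟨p - Pi.single i 1, (tsub_add_cancel_of_le hle).symm⟩
    have hij : i ≠ j := by rintro rfl; omega
    simp only [Pi.add_apply, Pi.single_eq_same, Pi.single_eq_of_ne hij.symm, add_zero] at hi hj
    have hr : r j ≤ r i := by omega
    refine (hF r i j hr).trans (ih _ ?_ ?_ rfl)
    · rw [← hn]
      refine sum_lt_sum (fun l _ => ?_) ⟨i, mem_univ i, ?_⟩
      · obtain rfl | hlj := eq_or_ne l j
        · simp only [Pi.add_apply, Pi.single_eq_same]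
          omega
        · simp only [Pi.add_apply, Pi.single_eq_of_ne hlj]
          omega
      · simp only [Pi.add_apply, Pi.single_eq_same, Pi.single_eq_of_ne hij]
        omega
    · simpa [sum_add_distrib] using hsum

/-- The distribution of `n` into `k` parts that are as equal as possible, the larger parts
first. -/
def balancedParts (n k : ℕ) (i : Fin k) : ℕ :=
  n / k + if (i : ℕ) < n % k then 1 else 0

theorem equitableOn_balancedParts (n k : ℕ) : Set.univ.EquitableOn (balancedParts n k) := by
  intro i j _ _
  unfold balancedParts
  split_ifs <;> omega

theorem sum_balancedParts (n : ℕ) {k : ℕ} (hk : 0 < k) : ∑ i, balancedParts n k i = n := by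
  have hcard : #{i : Fin k | (i : ℕ) < n % k} = n % k := by
    rw [Fin.card_filter_val_lt, min_eq_right (Nat.mod_lt n hk).le]
  simp only [balancedParts, sum_add_distrib, sum_const, card_univ, Fintype.card_fin, smul_eq_mul,
    sum_boole, hcard, Nat.cast_id, Nat.div_add_mod]

end Transfer

section MarkedFamilies

variable {ι : Type*} [DecidableEq ι] {s : Finset ι} {i j : ι}

/-- The number of ways to mark an index `c ∈ s` and to choose, for `i ∈ s`, a subset of a set of
size `p i` that is nonempty unless `i = c`. -/
def numMarkedFamilies (s : Finset ι) (p : ι → ℕ) : ℕ :=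
  ∑ c ∈ s, 2 ^ p c * ∏ i ∈ s.erase c, (2 ^ p i - 1)

theorem numMarkedFamilies_congr {p q : ι → ℕ} (h : ∀ l ∈ s, p l = q l) :
    numMarkedFamilies s p = numMarkedFamilies s q :=
  sum_congr rfl fun c hc => by
    rw [h c hc, prod_congr rfl fun l hl => by rw [h l (mem_of_mem_erase hl)]]

theorem numMarkedFamilies_insert (hi : i ∉ s) (p : ι → ℕ) :
    numMarkedFamilies (insert i s) p =
      2 ^ p i * ∏ l ∈ s, (2 ^ p l - 1) + (2 ^ p i - 1) * numMarkedFamilies s p := by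
  rw [numMarkedFamilies, numMarkedFamilies, sum_insert hi, erase_insert hi, mul_sum]
  congr 1
  refine sum_congr rfl fun c hc => ?_
  rw [erase_insert_of_ne (ne_of_mem_of_not_mem hc hi).symm,
    prod_insert fun h => hi (mem_of_mem_erase h)]
  ring

theorem numMarkedFamilies_insert_insert (hi : i ∉ insert j s) (hj : j ∉ s) (p : ι → ℕ) :
    numMarkedFamilies (insert i (insert j s)) p =
      (2 ^ p i - 1) * (2 ^ p j - 1) * (numMarkedFamilies s p + ∏ l ∈ s, (2 ^ p l - 1)) +
        (2 ^ (p i + p j) - 1) * ∏ l ∈ s, (2 ^ p l - 1) := by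
  rw [numMarkedFamilies_insert hi, numMarkedFamilies_insert hj, prod_insert hj, pow_add]
  obtain ⟨x, hx⟩ := Nat.exists_eq_add_of_le' (Nat.one_le_two_pow (n := p i))
  obtain ⟨y, hy⟩ := Nat.exists_eq_add_of_le' (Nat.one_le_two_pow (n := p j))
  have hxy : (x + 1) * (y + 1) - 1 = x * y + x + y := by
    rw [Nat.sub_eq_iff_eq_add (by nlinarith)]
    ring
  rw [hx, hy, hxy, Nat.add_sub_cancel, Nat.add_sub_cancel]
  ring

theorem pow_succ_sub_one_mul_pow_sub_one_le (c : ℕ) {a b : ℕ} (h : b ≤ a) :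
    (c ^ (a + 1) - 1) * (c ^ b - 1) ≤ (c ^ a - 1) * (c ^ (b + 1) - 1) := by
  obtain rfl | hc := Nat.eq_zero_or_pos c
  · simp
  have hle : c ^ b ≤ c ^ a := Nat.pow_le_pow_right hc h
  zify [Nat.one_le_pow _ c hc] at hc hle ⊢
  have hmul : ((c : ℤ) - 1) * c ^ b ≤ (c - 1) * c ^ a := mul_le_mul_of_nonneg_left hle (by linarith)
  rw [pow_succ, pow_succ]
  linarith

theorem numMarkedFamilies_univ_transfer_le [Fintype ι] (r : ι → ℕ) (h : r j ≤ r i) :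
    numMarkedFamilies univ (r + Pi.single i 1) ≤ numMarkedFamilies univ (r + Pi.single j 1) := by
  obtain rfl | hij := eq_or_ne i j
  · exact le_rfl
  let s : Finset ι := {i, j}ᶜ
  have hi : i ∉ insert j s := by simp [s, hij]
  have hj : j ∉ s := by simp [s]
  have huniv : univ = insert i (insert j s) := by
    ext l
    simp only [s, mem_univ, mem_insert, mem_compl, mem_singleton, true_iff]
    tauto
  have heq : ∀ l ∈ s, (r + Pi.single i 1 : ι → ℕ) l = (r + Pi.single j 1 : ι → ℕ) l := by
    intro l hl
    simp only [s, mem_compl, mem_insert, mem_singleton, not_or] at hl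
    simp [hl.1, hl.2]
  rw [huniv, numMarkedFamilies_insert_insert hi hj, numMarkedFamilies_insert_insert hi hj,
    numMarkedFamilies_congr heq, prod_congr rfl fun l hl => by rw [heq l hl]]
  simp only [Pi.add_apply, Pi.single_eq_same, Pi.single_eq_of_ne hij, Pi.single_eq_of_ne hij.symm,
    add_zero, add_right_comm (r i) 1, add_assoc (r i)]
  gcongr ?_ * _ + _
  exact pow_succ_sub_one_mul_pow_sub_one_le 2 h

end MarkedFamilies

section Domination

variable {V : Type*} {G : SimpleGraph V}

theorem dominates_iff_forall_mem_or {D : Set V} : Dominates G D ↔ ∀ v, v ∈ D ∨ ∃ u ∈ D, G.Adj u v :=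
  forall_congr' fun _ => or_iff_not_imp_left.symm

theorem minDomSet_iff_of_forall_exists_subset [Finite V] {n : ℕ} {𝒯 : Set (Set V)}
    (hcard : ∀ T ∈ 𝒯, T.ncard = n) (hsub : ∀ D, Dominates G D → ∃ T ∈ 𝒯, T ⊆ D)
    (hdom : ∃ T ∈ 𝒯, Dominates G T) {D : Set V} :
    MinDomSet G D ↔ Dominates G D ∧ D ∈ 𝒯 := by
  have hdomN : domN G = n := by
    obtain ⟨T, hT, hTdom⟩ := hdom
    refine le_antisymm (Nat.sInf_le ⟨T, hTdom, hcard T hT⟩) (le_csInf ⟨n, T, hTdom, hcard T hT⟩ ?_)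
    rintro _ ⟨D, hD, rfl⟩
    obtain ⟨T', hT', hT'D⟩ := hsub D hD
    exact (hcard T' hT').ge.trans (Set.ncard_le_ncard hT'D)
  rw [MinDomSet, hdomN]
  refine and_congr_right fun hD => ⟨fun hDn => ?_, hcard D⟩
  obtain ⟨T, hT, hTD⟩ := hsub D hD
  rwa [← Set.eq_of_subset_of_ncard_le hTD (by rw [hDn, hcard T hT])]

end Domination

/-- The vertex set of `TreeT p`. -/
abbrev TreeVtx {k : ℕ} (p : Fin k → ℕ) : Type :=
  Unit ⊕ Fin k ⊕ (Σ i : Fin k, Fin (p i)) ⊕ (Σ i : Fin k, Fin (p i))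

namespace TreeVtx

variable {k : ℕ} {p : Fin k → ℕ}

/-- The root `x` of `TreeT p`. -/
abbrev root : TreeVtx p := .inl ()

/-- The vertex `w(i)` of `TreeT p`. -/
abbrev w (i : Fin k) : TreeVtx p := .inr (.inl i)

/-- The vertex `v(i,j)` of `TreeT p`, for `s = ⟨i, j⟩`. -/
abbrev v (s : Σ i : Fin k, Fin (p i)) : TreeVtx p := .inr (.inr (.inl s))

/-- The endvertex `u(i,j)` of `TreeT p`, for `s = ⟨i, j⟩`. -/
abbrev u (s : Σ i : Fin k, Fin (p i)) : TreeVtx p := .inr (.inr (.inr s))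

end TreeVtx

namespace TreeT

open TreeVtx

variable {k : ℕ} {p : Fin k → ℕ}

theorem adj_root_iff {a : TreeVtx p} : (TreeT p).Adj a root ↔ ∃ i, a = w i := by
  rcases a with ⟨⟩ | i | s | s <;> simp [TreeT]

theorem adj_w_iff {a : TreeVtx p} {i : Fin k} :
    (TreeT p).Adj a (w i) ↔ a = root ∨ ∃ j, a = v ⟨i, j⟩ := by
  rcases a with ⟨⟩ | i' | ⟨i', j⟩ | s <;> grind [TreeT, SimpleGraph.fromRel_adj]

theorem adj_v_iff {a : TreeVtx p} {s : Σ i : Fin k, Fin (p i)} :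
    (TreeT p).Adj a (v s) ↔ a = w s.1 ∨ a = u s := by
  rcases a with ⟨⟩ | i' | s' | s' <;> grind [TreeT, SimpleGraph.fromRel_adj]

theorem adj_u_iff {a : TreeVtx p} {s : Σ i : Fin k, Fin (p i)} :
    (TreeT p).Adj a (u s) ↔ a = v s := by
  rcases a with ⟨⟩ | i' | s' | s' <;> grind [TreeT, SimpleGraph.fromRel_adj]

theorem dominates_iff {D : Set (TreeVtx p)} :
    Dominates (TreeT p) D ↔
      (root ∈ D ∨ ∃ i, w i ∈ D) ∧ (∀ i, w i ∈ D ∨ root ∈ D ∨ ∃ j, v ⟨i, j⟩ ∈ D) ∧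
        ∀ s, u s ∈ D ∨ v s ∈ D := by
  have hroot : (∃ a ∈ D, (TreeT p).Adj a root) ↔ ∃ i, w i ∈ D := by
    simp only [adj_root_iff]
    grind
  have hw (i : Fin k) : (∃ a ∈ D, (TreeT p).Adj a (w i)) ↔ root ∈ D ∨ ∃ j, v ⟨i, j⟩ ∈ D := by
    simp only [adj_w_iff]
    grind
  have hv (s) : (∃ a ∈ D, (TreeT p).Adj a (v s)) ↔ w s.1 ∈ D ∨ u s ∈ D := by
    simp only [adj_v_iff]
    grind
  have hu (s) : (∃ a ∈ D, (TreeT p).Adj a (u s)) ↔ v s ∈ D := by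
    simp only [adj_u_iff]
    grind
  rw [dominates_iff_forall_mem_or]
  simp only [Sum.forall, hroot, hw, hv, hu]
  -- The condition at `v s` follows from the one at `u s`.
  grind

/-- The transversal of the closed neighborhoods of the root and of the endvertices `u(i,j)` that
picks the root if `c = none`, picks `w(i)` if `c = some i`, and picks `v(i,j)` if `j ∈ B i` and
`u(i,j)` otherwise. -/
def transversal (c : Option (Fin k)) (B : ∀ i, Finset (Fin (p i))) : Set (TreeVtx p) :=
  insert (c.elim root w) (Set.range fun s => if s.2 ∈ B s.1 then v s else u s)

section Mem

variable {c : Option (Fin k)} {B : ∀ i, Finset (Fin (p i))} {i : Fin k}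
  {s : Σ i : Fin k, Fin (p i)}

@[simp] theorem root_mem_transversal : (root : TreeVtx p) ∈ transversal c B ↔ c = none := by
  cases c <;> simp [transversal, ite_eq_iff]

@[simp] theorem w_mem_transversal : (w i : TreeVtx p) ∈ transversal c B ↔ c = some i := by
  cases c <;> simp [transversal, eq_comm (a := w i), ite_eq_iff]

@[simp] theorem v_mem_transversal : v s ∈ transversal c B ↔ s.2 ∈ B s.1 := by
  cases c <;> simp [transversal, ite_eq_iff]

@[simp] theorem u_mem_transversal : u s ∈ transversal c B ↔ s.2 ∉ B s.1 := by
  cases c <;> simp [transversal, ite_eq_iff]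

end Mem

theorem transversal_injective :
    Function.Injective fun cB : Σ _ : Option (Fin k), ∀ i, Finset (Fin (p i)) =>
      transversal cB.1 cB.2 := by
  rintro ⟨c, B⟩ ⟨c', B'⟩ h
  have hmem : ∀ a, a ∈ transversal c B ↔ a ∈ transversal c' B' := Set.ext_iff.1 h
  obtain rfl : c = c' := by
    ext i
    simpa using hmem (w i)
  obtain rfl : B = B' := by
    ext i j
    simpa using hmem (v ⟨i, j⟩)
  rfl

theorem ncard_transversal (c : Option (Fin k)) (B : ∀ i, Finset (Fin (p i))) :
    (transversal c B).ncard = ∑ i, p i + 1 := by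
  have hinj : Function.Injective fun s => (if s.2 ∈ B s.1 then v s else u s : TreeVtx p) := by
    intro s s' h
    dsimp only at h
    split_ifs at h <;> simp_all
  rw [transversal, Set.ncard_insert_of_notMem, Set.ncard_range_of_injective hinj]
  · simp
  · cases c <;> simp [ite_eq_iff]

theorem exists_transversal_subset {D : Set (TreeVtx p)} (hD : Dominates (TreeT p) D) :
    ∃ c B, transversal c B ⊆ D := by
  classical
  obtain ⟨hroot, -, hu⟩ := dominates_iff.1 hD
  obtain ⟨c, hc⟩ : ∃ c : Option (Fin k), c.elim root w ∈ D := Option.exists.2 hroot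
  refine ⟨c, fun i => {j | v ⟨i, j⟩ ∈ D}, Set.insert_subset hc ?_⟩
  rintro _ ⟨s, rfl⟩
  by_cases hs : v s ∈ D
  · simp [hs]
  · simpa [hs] using (hu s).resolve_right hs

theorem dominates_transversal_iff {c : Option (Fin k)} {B : ∀ i, Finset (Fin (p i))} :
    Dominates (TreeT p) (transversal c B) ↔ ∀ i, c = none ∨ c = some i ∨ (B i).Nonempty := by
  rw [dominates_iff]
  simp only [root_mem_transversal, w_mem_transversal, v_mem_transversal, u_mem_transversal]
  cases c <;> grind [Finset.Nonempty]

theorem minDomSet_iff {D : Set (TreeVtx p)} :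
    MinDomSet (TreeT p) D ↔
      ∃ c B, (∀ i, c = none ∨ c = some i ∨ (B i).Nonempty) ∧ transversal c B = D := by
  rw [minDomSet_iff_of_forall_exists_subset (n := ∑ i, p i + 1)
    (𝒯 := {T | ∃ c B, transversal c B = T})]
  · constructor
    · rintro ⟨hD, c, B, rfl⟩
      exact ⟨c, B, dominates_transversal_iff.1 hD, rfl⟩
    · rintro ⟨c, B, hcB, rfl⟩
      exact ⟨dominates_transversal_iff.2 hcB, c, B, rfl⟩
  · rintro _ ⟨c, B, rfl⟩
    exact ncard_transversal c B
  · intro D hD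
    obtain ⟨c, B, hcB⟩ := exists_transversal_subset hD
    exact ⟨_, ⟨c, B, rfl⟩, hcB⟩
  · exact ⟨_, ⟨none, fun _ => ∅, rfl⟩, dominates_transversal_iff.2 fun _ => .inl rfl⟩

/-- The families `B` for which `transversal c B` is dominating. -/
def dominatingFamilies (p : Fin k → ℕ) (c : Option (Fin k)) :
    Finset (∀ i, Finset (Fin (p i))) :=
  Fintype.piFinset fun i => {A | c = none ∨ c = some i ∨ A.Nonempty}

theorem card_dominatingFamilies_none (p : Fin k → ℕ) :
    #(dominatingFamilies p none) = 2 ^ ∑ i, p i := by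
  simp [dominatingFamilies, prod_pow_eq_pow_sum]

theorem card_dominatingFamilies_some (p : Fin k → ℕ) (c : Fin k) :
    #(dominatingFamilies p (some c)) = 2 ^ p c * ∏ i ∈ univ.erase c, (2 ^ p i - 1) := by
  rw [dominatingFamilies, Fintype.card_piFinset, ← mul_prod_erase _ _ (mem_univ c)]
  congr 1
  · simp
  · refine prod_congr rfl fun i hi => ?_
    have hfilter : ({A | some c = none ∨ some c = some i ∨ A.Nonempty} :
        Finset (Finset (Fin (p i)))) = univ.erase ∅ := by
      ext A
      simp [(ne_of_mem_erase hi).symm, nonempty_iff_ne_empty]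
    rw [hfilter, card_erase_of_mem (mem_univ _)]
    simp

theorem numMinDomSets_eq (p : Fin k → ℕ) :
    numMinDomSets (TreeT p) = 2 ^ ∑ i, p i + numMarkedFamilies univ p := by
  have himage : {D | MinDomSet (TreeT p) D} =
      (fun cB : Σ _ : Option (Fin k), ∀ i, Finset (Fin (p i)) => transversal cB.1 cB.2) ''
        (univ.sigma (dominatingFamilies p) : Finset _) := by
    ext D
    simp [minDomSet_iff, dominatingFamilies, Sigma.exists]
  rw [numMinDomSets, himage, transversal_injective.injOn.ncard_image, Set.ncard_coe_finset,
    card_sigma, Fintype.sum_option, card_dominatingFamilies_none, numMarkedFamilies]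
  simp only [card_dominatingFamilies_some]

end TreeT

theorem TreeT_balanced_maximizes_general {k : ℕ} {p q : Fin k → ℕ}
    (hq : Set.univ.EquitableOn q) (hsum : ∑ i, p i = ∑ i, q i) :
    numMinDomSets (TreeT p) ≤ numMinDomSets (TreeT q) := by
  rw [TreeT.numMinDomSets_eq, TreeT.numMinDomSets_eq, hsum]
  exact Nat.add_le_add_left (le_of_equitableOn_of_forall_transfer
    (fun r _ _ => numMarkedFamilies_univ_transfer_le r) hq hsum) _

/-- among all choices of positive integers `p i` summing to `γ - 1`,
the number of minimum dominating sets of `T(p 0, …, p (k-1))` is maximized by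
choosing the `p i` as equal as possible: `⌈(γ-1)/k⌉` for the first `(γ-1) mod k`
indices and `⌊(γ-1)/k⌋` for the remaining ones. -/
theorem TreeT_balanced_maximizes (γ k : ℕ) (hk : 0 < k) (hkγ : k < γ)
    (p : Fin k → ℕ) (hp : ∀ i, 0 < p i) (hsum : ∑ i, p i = γ - 1) :
    numMinDomSets (TreeT p) ≤
      numMinDomSets (TreeT (fun i : Fin k =>
        (γ - 1) / k + if (i : ℕ) < (γ - 1) % k then 1 else 0)) :=
  TreeT_balanced_maximizes_general (equitableOn_balancedParts (γ - 1) k)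
    (hsum.trans (sum_balancedParts (γ - 1) hk).symm)
end
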